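/- arXiv:1708.08599 — 2 statements merged into one kernel-verified Lean document; each statement's English description precedes it below -/
import Mathlib

section
/- Let (a_n)_{n≥1} be a strictly increasing sequence of positive integers such that E(A_N) = Ω(N³), i.e. there exists c > 0 with E(A_N) > cN³ for infinitely many N. Then the set NPPC((a_n)_n) has full Lebesgue measure in [0,1]. -/
open Filter MeasureTheory
open scoped Classical

/-- Distance from a real number to the nearest integer. -/
noncomputable def dni (x : ℝ) : ℝ := |x - round x|

/-- Additive energy of a finite set of naturals:
`#{(a,b,c,d) ∈ I⁴ : a + b = c + d}`. -/
def addEnergy (A : Finset ℕ) : ℕ :=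
  (((A ×ˢ A) ×ˢ (A ×ˢ A)).filter fun q => q.1.1 + q.1.2 = q.2.1 + q.2.2).card

/-- The truncation `A_N = {a_n : 1 ≤ n ≤ N}`. -/
def trunc (a : ℕ → ℕ) (N : ℕ) : Finset ℕ := (Finset.Icc 1 N).image a

/-- Pair correlation function `R([-s,s], α, N)`. -/
noncomputable def pcf (a : ℕ → ℕ) (s α : ℝ) (N : ℕ) : ℝ :=
  (((Finset.Icc 1 N ×ˢ Finset.Icc 1 N).filter fun p =>
      p.1 ≠ p.2 ∧ dni (α * (a p.1 : ℝ) - α * (a p.2 : ℝ)) ≤ s / N).card : ℝ) / N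

/-- `(α a_n)_n` has Poissonian pair correlations. -/
def hasPPC (a : ℕ → ℕ) (α : ℝ) : Prop :=
  ∀ s : ℝ, 0 ≤ s → Tendsto (fun N => pcf a s α N) atTop (nhds (2 * s))

/-- The exceptional set `NPPC((a_n)_n)` of `α ∈ (0,1)` without PPC. -/
def NPPC (a : ℕ → ℕ) : Set ℝ := {α | α ∈ Set.Ioo (0 : ℝ) 1 ∧ ¬ hasPPC a α}

/-!
Write `r(v)` for the number of representations of `v` as a difference of two elements of `A_N`.
Cut the circle into `M ≈ cN/2` arcs and colour `x ∈ A_N` by the arc containing `αx`. By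
Cauchy–Schwarz, keeping only the quadruples `x + y = z + w` in which `x` and `z` have the same
colour costs the energy at most a factor `M`, so `∑ r(x - z) ≥ 2N²` over the pairs with
`‖αx - αz‖ ≤ 1/M`. The diagonal contributes at most `N²`. If `(α a_n)_n` had Poissonian pair
correlations, there would be only `O(N)` other pairs, and one of them would satisfy
`r(x - z) ≥ δN` for a fixed `δ > 0`. All `r(x - z)` representations of `x - z` have the same
distance `‖αx - αz‖`, so `s ↦ R([-s,s],α,N)` jumps by at least `δ` inside a fixed compact interval.
This is impossible for large `N`, as monotone functions converging pointwise to a continuous limit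
have vanishing jumps on compact sets.
-/

section Combinatorics

open Finset hiding addEnergy

section Collisions

variable {ι β κ : Type*} [DecidableEq β] [DecidableEq κ]

theorem card_filter_apply_eq_apply (T : Finset ι) {f : ι → β} {K : Finset β}
    (hf : Set.MapsTo f T K) :
    #{p ∈ T ×ˢ T | f p.1 = f p.2} = ∑ k ∈ K, #{x ∈ T | f x = k} ^ 2 := by
  rw [card_eq_sum_card_fiberwise (f := fun p => f p.1) (t := K)
    fun p hp => hf (mem_product.1 (mem_filter.1 hp).1).1]
  refine sum_congr rfl fun k _ => ?_
  rw [sq, ← card_product]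
  congr 1
  grind

theorem card_filter_apply_eq_apply_le_mul (T : Finset ι) (f : ι → β) {g : ι → κ} {L : Finset κ}
    (hg : Set.MapsTo g T L) :
    #{p ∈ T ×ˢ T | f p.1 = f p.2} ≤ #L * #{p ∈ T ×ˢ T | f p.1 = f p.2 ∧ g p.1 = g p.2} := by
  have hf : Set.MapsTo f T (T.image f) := fun _ hx => mem_image_of_mem f hx
  have hfg : Set.MapsTo (fun x => (f x, g x)) T ↑(T.image f ×ˢ L) :=
    fun _ hx => mem_product.2 ⟨hf hx, hg hx⟩
  calc #{p ∈ T ×ˢ T | f p.1 = f p.2}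
      = ∑ k ∈ T.image f, (∑ l ∈ L, #{x ∈ T | (f x, g x) = (k, l)}) ^ 2 := by
        rw [card_filter_apply_eq_apply T hf]
        refine sum_congr rfl fun k _ => ?_
        rw [card_eq_sum_card_fiberwise fun x hx => hg (mem_filter.1 hx).1]
        simp only [filter_filter, Prod.mk.injEq]
    _ ≤ ∑ k ∈ T.image f, #L * ∑ l ∈ L, #{x ∈ T | (f x, g x) = (k, l)} ^ 2 :=
        sum_le_sum fun _ _ => sq_sum_le_card_mul_sum_sq
    _ = #L * #{p ∈ T ×ˢ T | f p.1 = f p.2 ∧ g p.1 = g p.2} := by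
        rw [← mul_sum, ← sum_product', ← card_filter_apply_eq_apply T hfg]
        simp only [Prod.mk.injEq]

end Collisions

/-- The representations of `v` as a difference of two elements of `A`. The difference is taken in
`ℤ` because subtraction of naturals truncates. -/
def diffPairs (A : Finset ℕ) (v : ℤ) : Finset (ℕ × ℕ) :=
  {p ∈ A ×ˢ A | (p.1 : ℤ) - p.2 = v}

theorem card_diffPairs_zero (A : Finset ℕ) : #(diffPairs A 0) = #A := by
  have hdiag : diffPairs A 0 = A.diag := by
    ext p
    grind [diffPairs]
  rw [hdiag, diag_card]

theorem addEnergy_le_mul_sum_card_diffPairs (A : Finset ℕ) {κ : Type*} [DecidableEq κ]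
    {g : ℕ → κ} {L : Finset κ} (hg : Set.MapsTo g A L) :
    addEnergy A ≤ #L * ∑ p ∈ A ×ˢ A with g p.1 = g p.2, #(diffPairs A (p.1 - p.2)) := by
  refine (card_filter_apply_eq_apply_le_mul (A ×ˢ A) (fun p => p.1 + p.2) (g := fun p => g p.1)
    fun p hp => hg (mem_product.1 hp).1).trans (Nat.mul_le_mul_left _ ?_)
  rw [card_eq_sum_card_fiberwise (f := fun q => (q.1.1, q.2.1))
    (t := {p ∈ A ×ˢ A | g p.1 = g p.2}) fun q hq => by grind]
  -- `a + b = c + d` exhibits `d - b` as a representation of `a - c`.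
  refine sum_le_sum fun p _ => card_le_card_of_injOn (fun q => (q.2.2, q.1.2)) ?_ ?_
  · intro q hq
    grind [diffPairs]
  · intro q hq q' hq' h
    grind

theorem addEnergy_le_mul_add_sum_card_diffPairs (A : Finset ℕ) {κ : Type*} [DecidableEq κ]
    {g : ℕ → κ} {L : Finset κ} (hg : Set.MapsTo g A L) :
    addEnergy A ≤
      #L * (#A ^ 2 + ∑ p ∈ A.offDiag with g p.1 = g p.2, #(diffPairs A (p.1 - p.2))) := by
  have hdiag : ∑ p ∈ A.diag with g p.1 = g p.2, #(diffPairs A (p.1 - p.2)) = #A ^ 2 := by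
    rw [filter_true_of_mem fun p hp => by rw [(mem_diag.1 hp).2], sum_diag]
    simp only [sub_self, card_diffPairs_zero, sum_const, smul_eq_mul, sq]
  have h := addEnergy_le_mul_sum_card_diffPairs A hg
  rwa [← diag_union_offDiag, filter_union, sum_union
    (disjoint_filter_filter (disjoint_diag_offDiag A)), hdiag] at h

theorem dni_nonneg (x : ℝ) : 0 ≤ dni x := abs_nonneg _

theorem dni_sub_le_of_floor_mul_fract_eq {M x y : ℝ} (hM : 0 < M)
    (h : ⌊M * Int.fract x⌋ = ⌊M * Int.fract y⌋) : dni (x - y) ≤ 1 / M :=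
  calc dni (x - y) ≤ |x - y - (⌊x⌋ - ⌊y⌋ : ℤ)| := round_le _ _
    _ = |Int.fract x - Int.fract y| := by simp only [Int.fract, Int.cast_sub]; ring_nf
    _ ≤ 1 / M := by
      have hlt := Int.abs_sub_lt_one_of_floor_eq_floor h
      rw [← mul_sub, abs_mul, abs_of_pos hM] at hlt
      exact (le_div_iff₀' hM).2 hlt.le

theorem floor_mul_fract_mem_Ico {M : ℕ} (hM : 0 < M) (x : ℝ) :
    ⌊M * Int.fract x⌋ ∈ Ico (0 : ℤ) M := by
  have hM' : (0 : ℝ) < M := by exact_mod_cast hM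
  rw [mem_Ico, Int.floor_nonneg, Int.floor_lt]
  exact ⟨mul_nonneg hM'.le (Int.fract_nonneg x),
    by exact_mod_cast mul_lt_of_lt_one_right hM' (Int.fract_lt_one x)⟩

/-- The ordered pairs of distinct elements of `A` whose dilates by `α` are at distance at most `r`
modulo one: the pairs counted by the pair correlation function, with `r` in place of `s / N`. -/
noncomputable def closePairs (A : Finset ℕ) (α r : ℝ) : Finset (ℕ × ℕ) :=
  {p ∈ A.offDiag | dni (α * (p.1 : ℝ) - α * (p.2 : ℝ)) ≤ r}

theorem addEnergy_le_of_forall_card_diffPairs_le {A : Finset ℕ} {α r m : ℝ} {M : ℕ} (hM : 0 < M)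
    (hr : 1 / (M : ℝ) ≤ r)
    (hm : ∀ p ∈ closePairs A α r, (#(diffPairs A (p.1 - p.2)) : ℝ) ≤ m) :
    (addEnergy A : ℝ) ≤ M * ((#A : ℝ) ^ 2 + #(closePairs A α r) * m) := by
  have hsub : {p ∈ A.offDiag |
      ⌊M * Int.fract (α * (p.1 : ℝ))⌋ = ⌊M * Int.fract (α * (p.2 : ℝ))⌋} ⊆ closePairs A α r :=
    monotone_filter_right _ fun p _ h =>
      (dni_sub_le_of_floor_mul_fract_eq (by exact_mod_cast hM) h).trans hr
  have henergy : addEnergy A ≤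
      M * (#A ^ 2 + ∑ p ∈ closePairs A α r, #(diffPairs A (p.1 - p.2))) := by
    have h := addEnergy_le_mul_add_sum_card_diffPairs A
      (g := fun x => ⌊M * Int.fract (α * (x : ℝ))⌋) (L := Ico (0 : ℤ) M)
      fun x _ => floor_mul_fract_mem_Ico hM _
    rw [Int.card_Ico, sub_zero, Int.toNat_natCast] at h
    exact h.trans (by gcongr)
  calc (addEnergy A : ℝ)
      ≤ M * ((#A : ℝ) ^ 2 + ∑ p ∈ closePairs A α r, (#(diffPairs A (p.1 - p.2)) : ℝ)) := by
        exact_mod_cast henergy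
    _ ≤ M * ((#A : ℝ) ^ 2 + #(closePairs A α r) * m) := by
        rw [← nsmul_eq_mul #(closePairs A α r)]
        gcongr
        exact sum_le_card_nsmul _ _ _ hm

theorem exists_mem_closePairs_lt_card_diffPairs {A : Finset ℕ} {α c K N : ℝ} (hK : 0 < K)
    (hA : #A ≤ N) (hN : 2 ≤ c * N) (hE : c * N ^ 3 < addEnergy A)
    (hclose : #(closePairs A α (4 / (c * N))) ≤ K * N) :
    ∃ p ∈ closePairs A α (4 / (c * N)), N / K < #(diffPairs A (p.1 - p.2)) := by
  by_contra! hm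
  set M := ⌊c * N / 2⌋₊
  have hN0 : 0 ≤ N := (Nat.cast_nonneg _).trans hA
  have hM : 0 < M := Nat.floor_pos.2 (by linarith)
  have hM_ge : (1 : ℝ) ≤ M := by exact_mod_cast hM
  have hM_le : M ≤ c * N / 2 := Nat.floor_le (by linarith)
  have hM_gt : c * N / 2 < M + 1 := Nat.lt_floor_add_one _
  have hr : 1 / (M : ℝ) ≤ 4 / (c * N) := by
    rw [div_le_div_iff₀ (by linarith) (by linarith)]
    linarith
  refine hE.not_ge ?_
  calc (addEnergy A : ℝ)
      ≤ M * ((#A : ℝ) ^ 2 + #(closePairs A α (4 / (c * N))) * (N / K)) :=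
        addEnergy_le_of_forall_card_diffPairs_le hM hr hm
    _ ≤ c * N / 2 * (N ^ 2 + K * N * (N / K)) := by gcongr
    _ = c * N ^ 3 := by field_simp; ring

section PairCorrelation

variable {a : ℕ → ℕ} {s t α : ℝ} {N : ℕ}

/-- The index pairs counted by `pcf a s α N`. -/
noncomputable def closeIndexPairs (a : ℕ → ℕ) (s α : ℝ) (N : ℕ) : Finset (ℕ × ℕ) :=
  {p ∈ Icc 1 N ×ˢ Icc 1 N | p.1 ≠ p.2 ∧ dni (α * (a p.1 : ℝ) - α * (a p.2 : ℝ)) ≤ s / N}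

theorem pcf_eq_card_closeIndexPairs_div (a : ℕ → ℕ) (s α : ℝ) (N : ℕ) :
    pcf a s α N = (#(closeIndexPairs a s α N) : ℝ) / N := rfl

theorem closeIndexPairs_mono (a : ℕ → ℕ) (α : ℝ) (N : ℕ) :
    Monotone fun s => closeIndexPairs a s α N := fun s t hst =>
  monotone_filter_right _ fun _ _ h => ⟨h.1, h.2.trans (by gcongr)⟩

theorem pcf_mono (a : ℕ → ℕ) (α : ℝ) (N : ℕ) : Monotone fun s => pcf a s α N := by
  intro s t hst
  simp only [pcf_eq_card_closeIndexPairs_div]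
  gcongr
  exact closeIndexPairs_mono a α N hst

theorem pcf_of_neg (hs : s < 0) : pcf a s α N = 0 := by
  rcases N.eq_zero_or_pos with rfl | hN
  · simp [pcf]
  · have hsN : s / N < 0 := div_neg_of_neg_of_pos hs (by exact_mod_cast hN)
    rw [pcf_eq_card_closeIndexPairs_div, closeIndexPairs, filter_false_of_mem fun p _ h =>
      (hsN.trans_le (dni_nonneg _)).not_ge h.2]
    simp

theorem hasPPC.tendsto_pcf (h : hasPPC a α) (s : ℝ) :
    Tendsto (fun N => pcf a s α N) atTop (nhds (2 * max s 0)) := by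
  rcases le_or_gt 0 s with hs | hs
  · simpa only [max_eq_left hs] using h s hs
  · simp [pcf_of_neg hs, max_eq_right hs.le]

theorem card_trunc_le (a : ℕ → ℕ) (N : ℕ) : #(trunc a N) ≤ N :=
  card_image_le.trans_eq (Nat.card_Icc 1 N)

theorem card_div_le_pcf_sub_pcf (hst : s ≤ t) {P : Finset (ℕ × ℕ)}
    (hP : P ⊆ (trunc a N).offDiag)
    (hdni : ∀ p ∈ P, dni (α * (p.1 : ℝ) - α * (p.2 : ℝ)) ∈ Set.Ioc (s / N) (t / N)) :
    (#P : ℝ) / N ≤ pcf a t α N - pcf a s α N := by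
  have hsurj : Set.SurjOn (Prod.map a a)
      ↑(closeIndexPairs a t α N \ closeIndexPairs a s α N) P := by
    rintro ⟨x, y⟩ hp
    obtain ⟨hx, hy, hxy⟩ := mem_offDiag.1 (hP hp)
    obtain ⟨i, hi, rfl⟩ := mem_image.1 hx
    obtain ⟨j, hj, rfl⟩ := mem_image.1 hy
    refine ⟨(i, j), ?_, rfl⟩
    have hij := hdni _ hp
    grind [closeIndexPairs]
  rw [pcf_eq_card_closeIndexPairs_div, pcf_eq_card_closeIndexPairs_div, ← sub_div,
    ← cast_card_sdiff (closeIndexPairs_mono a α N hst)]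
  exact div_le_div_of_nonneg_right (by exact_mod_cast card_le_card_of_surjOn _ hsurj)
    N.cast_nonneg

theorem card_closePairs_le (a : ℕ → ℕ) (s α : ℝ) (N : ℕ) :
    (#(closePairs (trunc a N) α (s / N)) : ℝ) ≤ pcf a s α N * N := by
  rcases N.eq_zero_or_pos with rfl | hN
  · simp [closePairs, trunc]
  have hN' : (0 : ℝ) < N := by exact_mod_cast hN
  have hneg : min s (-1) < 0 := (min_le_right _ _).trans_lt (by norm_num)
  have h := card_div_le_pcf_sub_pcf (a := a) (α := α) (N := N) (min_le_left s (-1))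
    (P := closePairs (trunc a N) α (s / N)) (filter_subset _ _) fun p hp =>
      ⟨(div_neg_of_neg_of_pos hneg hN').trans_le (dni_nonneg _), (mem_filter.1 hp).2⟩
  rwa [pcf_of_neg hneg, sub_zero, div_le_iff₀ hN'] at h

theorem card_diffPairs_div_le_pcf_sub_pcf (hN : 0 < N) {x y : ℕ} (hxy : x ≠ y)
    (hs : s < N * dni (α * x - α * y)) :
    (#(diffPairs (trunc a N) (x - y)) : ℝ) / N ≤
      pcf a (N * dni (α * x - α * y)) α N - pcf a s α N := by
  have hN' : (0 : ℝ) < N := by exact_mod_cast hN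
  refine card_div_le_pcf_sub_pcf hs.le (fun q hq => by grind [diffPairs]) fun q hq => ?_
  have hq_sub : (q.1 : ℝ) - q.2 = x - y := by exact_mod_cast (mem_filter.1 hq).2
  rw [← mul_sub α (q.1 : ℝ), hq_sub, mul_sub, mul_div_cancel_left₀ _ hN'.ne']
  exact ⟨(div_lt_iff₀' hN').2 hs, le_rfl⟩

theorem exists_forall_lt_le_pcf_sub_pcf {c K : ℝ} (hK : 0 < K) (hN : 2 ≤ c * N)
    (hE : c * N ^ 3 < addEnergy (trunc a N)) (hpcf : pcf a (4 / c) α N ≤ K) :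
    ∃ t ∈ Set.Icc 0 (4 / c), ∀ s < t, 1 / K ≤ pcf a t α N - pcf a s α N := by
  have hN' : (0 : ℝ) < N :=
    N.cast_nonneg.lt_of_ne fun h => by norm_num [← h] at hN
  have hclose : (#(closePairs (trunc a N) α (4 / (c * N))) : ℝ) ≤ K * N := by
    rw [← div_div]
    exact (card_closePairs_le a (4 / c) α N).trans (by gcongr)
  obtain ⟨p, hp, hpop⟩ := exists_mem_closePairs_lt_card_diffPairs hK
    (by exact_mod_cast card_trunc_le a N) hN hE hclose
  obtain ⟨hp_offDiag, hp_dni⟩ := mem_filter.1 hp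
  rw [← div_div, le_div_iff₀' hN'] at hp_dni
  refine ⟨_, ⟨mul_nonneg hN'.le (dni_nonneg _), hp_dni⟩, fun s hs => ?_⟩
  calc 1 / K = N / K / N := by rw [div_right_comm, div_self hN'.ne']
    _ ≤ #(diffPairs (trunc a N) (p.1 - p.2)) / N := by gcongr
    _ ≤ _ := card_diffPairs_div_le_pcf_sub_pcf (by exact_mod_cast hN')
      (mem_offDiag.1 hp_offDiag).2.2 hs

end PairCorrelation

end Combinatorics

theorem eventually_forall_exists_lt_sub_lt_of_tendsto {ι X : Type*} [LinearOrder X]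
    [TopologicalSpace X] [OrderTopology X] [DenselyOrdered X] [NoMinOrder X] [NoMaxOrder X]
    {l : Filter ι} {F : ι → X → ℝ} {f : X → ℝ} (hF : ∀ i, Monotone (F i)) (hf : Continuous f)
    (hlim : ∀ x, Tendsto (fun i => F i x) l (nhds (f x))) {K : Set X} (hK : IsCompact K) {ε : ℝ}
    (hε : 0 < ε) : ∀ᶠ i in l, ∀ t ∈ K, ∃ s < t, F i t - F i s < ε := by
  suffices ∀ x ∈ K, ∀ᶠ q in l ×ˢ nhds x, ∃ s < q.2, F q.1 q.2 - F q.1 s < ε from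
    (Eventually.curry (hK.mem_prod_nhdsSet_of_forall this)).mono fun _ h => h.self_of_nhdsSet
  -- For `u < x < v`, every jump of `F i` inside `(u, v)` is at most `F i v - F i u`, which
  -- converges to `f v - f u`.
  intro x _
  have hnear : ∀ᶠ y in nhds x, |f y - f x| < ε / 2 :=
    Metric.tendsto_nhds.1 hf.continuousAt _ (half_pos hε)
  obtain ⟨u, hu, hux⟩ :=
    ((hnear.filter_mono nhdsWithin_le_nhds).and (self_mem_nhdsWithin (s := Set.Iio x))).exists
  obtain ⟨v, hv, hxv⟩ :=
    ((hnear.filter_mono nhdsWithin_le_nhds).and (self_mem_nhdsWithin (s := Set.Ioi x))).exists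
  have hvu : ∀ᶠ i in l, F i v - F i u < ε :=
    ((hlim v).sub (hlim u)).eventually_lt_const (by linarith [abs_lt.1 hu, abs_lt.1 hv])
  filter_upwards [hvu.prod_mk (Ioo_mem_nhds hux hxv)] with ⟨i, t⟩ ⟨hi, hut, htv⟩
  exact ⟨u, hut, (sub_le_sub_right (hF i htv.le) _).trans_lt hi⟩

theorem full_measure_of_large_energy_general (a : ℕ → ℕ) {c : ℝ} (hc : 0 < c)
    (hE : ∀ N₀ : ℕ, ∃ N, N₀ ≤ N ∧ c * (N : ℝ) ^ 3 < (addEnergy (trunc a N) : ℝ)) (α : ℝ) :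
    ¬ hasPPC a α := by
  intro hα
  set S := 4 / c
  have hS : 0 < S := by positivity
  set K := 2 * S + 1
  have hK : 0 < K := by positivity
  have hjump : ∀ᶠ N in atTop, ∀ t ∈ Set.Icc 0 S, ∃ s < t, pcf a t α N - pcf a s α N < 1 / K :=
    eventually_forall_exists_lt_sub_lt_of_tendsto (pcf_mono a α) (by fun_prop) hα.tendsto_pcf
      isCompact_Icc (one_div_pos.2 hK)
  have hbound : ∀ᶠ N in atTop, pcf a S α N < K := (hα S hS.le).eventually_lt_const (by simp [K])
  have hlarge : ∀ᶠ N : ℕ in atTop, 2 ≤ c * N :=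
    (tendsto_natCast_atTop_atTop.const_mul_atTop hc).eventually_ge_atTop 2
  obtain ⟨N, hEN, hjump, hbound, hlarge⟩ :=
    ((frequently_atTop.2 hE).and_eventually (hjump.and (hbound.and hlarge))).exists
  obtain ⟨t, ht, hle⟩ := exists_forall_lt_le_pcf_sub_pcf hK hlarge hEN hbound.le
  obtain ⟨s, hs, hlt⟩ := hjump t ht
  exact hlt.not_ge (hle s hs)

theorem full_measure_of_large_energy
    (a : ℕ → ℕ) (ha : ∀ n, 1 ≤ n → a n < a (n + 1)) (hpos : 0 < a 1)
    (c : ℝ) (hc : 0 < c)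
    (hE : ∀ N₀ : ℕ, ∃ N, N₀ ≤ N ∧ c * (N : ℝ) ^ 3 < (addEnergy (trunc a N) : ℝ)) :
    volume (NPPC a) = 1 := by
  have hNPPC : NPPC a = Set.Ioo 0 1 :=
    Set.ext fun α => and_iff_left (full_measure_of_large_energy_general a hc hE α)
  rw [hNPPC, Real.volume_Ioo, sub_zero, ENNReal.ofReal_one]
end

section
/- Let f : ℝ_{>0} → ℝ_{>2} be a function increasing monotonically to ∞ satisfying f(x) = O((log x)^{−7/3} x^{1/3}). Suppose the series Σ_{n≥1} 1/(n f(n)) converges and that sup{ f(2x)/f(x) : x ≥ x₀ } < 2 for some x₀ > 0. Then there exists a strictly increasing sequence (a_n)_{n≥1} of positive integers with E(A_N) = Θ(N³ / f(N)) such that NPPC((a_n)_n) has Hausdorff dimension at least 1/(1+λ), where λ := liminf_{x→∞} log f(x)/log x is the lower order of f at infinity. -/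
open Filter MeasureTheory
open scoped Classical

/-!
The very sparse terms `2 ^ n ^ 3` are interleaved with arithmetic progressions of length about
`2 ^ j / f (2 ^ j) ^ (1 / 3)`, one for the indices in each dyadic block `[2 ^ j, 2 ^ (j + 1))`. The
progressions are so far apart that an equation `a k + a l = a p + a q` is either trivial or confined
to one of them, so the energy is the sum of their cubes, of order `N ^ 3 / f N`, up to `O(N ^ 2)`.

If the binary digits of `α` vanish on `[n ^ 3, n ^ 3 + n)` for all `n`, then `2 ^ n ^ 3 * α` is
within `2 ^ (-n)` of an integer. At the end `N` of a block a positive proportion of the first `N`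
terms therefore clusters within `1 / N` of zero modulo one, which rules out Poissonian pair
correlations. The prescribed digits have density zero, so these `α` form a Cantor set of Hausdorff
dimension one.
-/

section PairCorrelation

theorem dni_le_abs_sub (x : ℝ) (k : ℤ) : dni x ≤ |x - k| :=
  round_le x k

theorem dni_sub_le (x y : ℝ) : dni (x - y) ≤ dni x + dni y := by
  calc dni (x - y) ≤ |x - y - (round x - round y : ℤ)| := dni_le_abs_sub _ _
    _ = |(x - round x) - (y - round y)| := by push_cast; ring_nf
    _ ≤ dni x + dni y := abs_sub _ _

theorem card_offDiag_div_le_pcf {a : ℕ → ℕ} {α s : ℝ} {N : ℕ} {L : Finset ℕ}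
    (hL : L ⊆ Finset.Icc 1 N) (hdni : ∀ n ∈ L, dni (α * a n) ≤ s / N) :
    (L.offDiag.card : ℝ) / N ≤ pcf a (2 * s) α N := by
  unfold pcf
  gcongr
  intro p hp
  obtain ⟨h1, h2, hne⟩ := Finset.mem_offDiag.1 hp
  refine Finset.mem_filter.2 ⟨Finset.mem_product.2 ⟨hL h1, hL h2⟩, hne, ?_⟩
  calc dni (α * a p.1 - α * a p.2) ≤ dni (α * a p.1) + dni (α * a p.2) := dni_sub_le _ _
    _ ≤ s / N + s / N := add_le_add (hdni _ h1) (hdni _ h2)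
    _ = 2 * s / N := by ring

theorem not_hasPPC_of_frequently_cluster {a : ℕ → ℕ} {α δ s : ℝ} (hδ : 0 < δ) (hs : 0 ≤ s)
    (h : ∃ᶠ N : ℕ in atTop, ∃ L ⊆ Finset.Icc 1 N, δ * N ≤ L.card ∧
      ∀ n ∈ L, dni (α * a n) ≤ s / N) :
    ¬ hasPPC a α := by
  intro hppc
  have hbdd : ∀ᶠ N : ℕ in atTop, pcf a (2 * s) α N < 2 * (2 * s) + 1 :=
    (hppc (2 * s) (by positivity)).eventually (gt_mem_nhds (lt_add_one _))
  have hgrow : Tendsto (fun N : ℕ => δ * (δ * N - 1)) atTop atTop :=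
    (tendsto_atTop_add_const_right _ (-1)
      (tendsto_natCast_atTop_atTop.const_mul_atTop hδ)).const_mul_atTop hδ
  obtain ⟨N, ⟨L, hL, hcard, hdni⟩, hlt, hge, hN⟩ := (h.and_eventually
    (hbdd.and ((hgrow.eventually_ge_atTop (2 * (2 * s) + 1)).and
      (eventually_gt_atTop 0)))).exists
  have hN' : (0 : ℝ) < N := by exact_mod_cast hN
  have hδN : 0 ≤ δ * N - 1 := by
    by_contra! hneg
    nlinarith
  have hpairs : δ * (δ * N - 1) ≤ (L.offDiag.card : ℝ) / N := by
    rw [le_div_iff₀ hN', Finset.offDiag_card,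
      Nat.cast_sub (Nat.le_mul_self _), Nat.cast_mul]
    calc δ * (δ * N - 1) * N = δ * N * (δ * N - 1) := by ring
      _ ≤ L.card * (L.card - 1 : ℝ) := by gcongr
      _ = _ := by ring
  linarith [card_offDiag_div_le_pcf hL hdni]

end PairCorrelation

section OfDigits

variable {b : ℕ}

theorem sum_ofDigitsTerm_congr {d d' : ℕ → Fin b} {m : ℕ} (h : ∀ i < m, d i = d' i) :
    ∑ i ∈ Finset.range m, Real.ofDigitsTerm d i = ∑ i ∈ Finset.range m, Real.ofDigitsTerm d' i :=
  Finset.sum_congr rfl fun i hi => by simp only [Real.ofDigitsTerm, h i (Finset.mem_range.1 hi)]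

theorem ofDigits_le_ofDigits_of_lt {d d' : ℕ → Fin b} {m : ℕ} (h : ∀ i < m, d' i = d i)
    (hlt : d' m < d m) : Real.ofDigits d' ≤ Real.ofDigits d := by
  rw [Real.ofDigits_eq_sum_add_ofDigits d (m + 1), Real.ofDigits_eq_sum_add_ofDigits d' (m + 1),
    Finset.sum_range_succ, Finset.sum_range_succ, sum_ofDigitsTerm_congr h, add_assoc, add_assoc]
  have hdigit : (d' m : ℝ) + 1 ≤ d m := by exact_mod_cast hlt
  have htail := Real.ofDigits_le_one fun i => d' (i + (m + 1))
  have htail' := Real.ofDigits_nonneg fun i => d (i + (m + 1))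
  gcongr _ + ?_
  calc Real.ofDigitsTerm d' m + ((b : ℝ) ^ (m + 1))⁻¹ * Real.ofDigits (fun i => d' (i + (m + 1)))
      = ((b : ℝ) ^ (m + 1))⁻¹ * (d' m + Real.ofDigits fun i => d' (i + (m + 1))) := by
        rw [Real.ofDigitsTerm]; ring
    _ ≤ ((b : ℝ) ^ (m + 1))⁻¹ * (d m + Real.ofDigits fun i => d (i + (m + 1))) := by
        gcongr ?_ * ?_; linarith
    _ = _ := by rw [Real.ofDigitsTerm]; ring

theorem ofDigits_update (d : ℕ → Fin b) (z : ℕ) (x : Fin b) :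
    Real.ofDigits (Function.update d z x) =
      Real.ofDigits d + ((x : ℝ) - (d z : ℝ)) * ((b : ℝ) ^ (z + 1))⁻¹ := by
  have htail : (fun i => Function.update d z x (i + (z + 1))) = fun i => d (i + (z + 1)) :=
    funext fun i => Function.update_of_ne (by omega) _ _
  have hhead : ∀ i < z, Function.update d z x i = d i := fun i hi =>
    Function.update_of_ne hi.ne _ _
  rw [Real.ofDigits_eq_sum_add_ofDigits d (z + 1),
    Real.ofDigits_eq_sum_add_ofDigits (Function.update d z x) (z + 1),
    Finset.sum_range_succ, Finset.sum_range_succ, sum_ofDigitsTerm_congr hhead, htail]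
  simp only [Real.ofDigitsTerm, Function.update_self]
  ring

/-- Raising the vanishing digit `z` of the smaller expansion to `1` keeps it the smaller one. -/
theorem inv_pow_le_ofDigits_sub_ofDigits [NeZero b] {d d' : ℕ → Fin b} {m z : ℕ}
    (h : ∀ i < m, d' i = d i) (hlt : d' m < d m) (hmz : m < z) (hz : d' z = 0) :
    ((b : ℝ) ^ (z + 1))⁻¹ ≤ Real.ofDigits d - Real.ofDigits d' := by
  have hb : 1 < b := by
    have := (d m).isLt
    have : (d' m : ℕ) < d m := hlt
    omega
  have hle := ofDigits_le_ofDigits_of_lt (d := d) (d' := Function.update d' z ⟨1, hb⟩) (m := m)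
    (fun i hi => by rw [Function.update_of_ne (by omega), h i hi])
    (by rwa [Function.update_of_ne (by omega)])
  rw [ofDigits_update, hz] at hle
  simp only [Nat.cast_one, Fin.val_zero, Nat.cast_zero, sub_zero, one_mul] at hle
  linarith

theorem inv_pow_le_abs_ofDigits_sub_ofDigits [NeZero b] {d d' : ℕ → Fin b} {m z : ℕ}
    (h : ∀ i < m, d i = d' i) (hne : d m ≠ d' m) (hmz : m < z) (hz : d z = 0) (hz' : d' z = 0) :
    ((b : ℝ) ^ (z + 1))⁻¹ ≤ |Real.ofDigits d - Real.ofDigits d'| := by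
  rcases hne.lt_or_gt with hlt | hlt
  · rw [abs_sub_comm]
    exact (inv_pow_le_ofDigits_sub_ofDigits h hlt hmz hz).trans (le_abs_self _)
  · exact (inv_pow_le_ofDigits_sub_ofDigits (fun i hi => (h i hi).symm) hlt hmz hz').trans
      (le_abs_self _)

theorem exists_int_sum_ofDigitsTerm_mul_pow (d : ℕ → Fin b) (m : ℕ) :
    ∃ k : ℤ, (∑ i ∈ Finset.range m, Real.ofDigitsTerm d i) * b ^ m = k := by
  have hb : (b : ℝ) ≠ 0 := by exact_mod_cast (Fin.pos (d 0)).ne'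
  refine ⟨∑ i ∈ Finset.range m, (d i : ℤ) * b ^ (m - (i + 1)), ?_⟩
  push_cast
  rw [Finset.sum_mul]
  refine Finset.sum_congr rfl fun i hi => ?_
  rw [Real.ofDigitsTerm, mul_assoc, pow_sub₀ _ hb (Finset.mem_range.1 hi), mul_comm (_ ^ m)]

theorem ofDigits_le_of_eq_zero [NeZero b] {d : ℕ → Fin b} {n : ℕ} (h : ∀ i < n, d i = 0) :
    Real.ofDigits d ≤ ((b : ℝ) ^ n)⁻¹ := by
  rw [Real.ofDigits_eq_sum_add_ofDigits d n, Finset.sum_eq_zero fun i hi => by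
    simp [Real.ofDigitsTerm, h i (Finset.mem_range.1 hi)], zero_add]
  exact mul_le_of_le_one_right (by positivity) (Real.ofDigits_le_one _)

theorem dni_ofDigits_mul_pow_le [NeZero b] {d : ℕ → Fin b} {m n : ℕ}
    (h : ∀ i ∈ Set.Ico m (m + n), d i = 0) :
    dni (Real.ofDigits d * b ^ m) ≤ ((b : ℝ) ^ n)⁻¹ := by
  obtain ⟨k, hk⟩ := exists_int_sum_ofDigitsTerm_mul_pow d m
  have hshift : Real.ofDigits d * b ^ m - k = Real.ofDigits fun i => d (i + m) := by
    rw [Real.ofDigits_eq_sum_add_ofDigits d m, add_mul, hk, mul_right_comm,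
      inv_mul_cancel₀ (pow_ne_zero _ (NeZero.ne _)), one_mul, add_sub_cancel_left]
  calc dni (Real.ofDigits d * b ^ m) ≤ |Real.ofDigits d * b ^ m - k| := dni_le_abs_sub _ _
    _ = Real.ofDigits fun i => d (i + m) := by rw [hshift, abs_of_nonneg (Real.ofDigits_nonneg _)]
    _ ≤ ((b : ℝ) ^ n)⁻¹ :=
        ofDigits_le_of_eq_zero fun i hi => h _ ⟨by omega, by omega⟩

end OfDigits

section Spread

/-- Writes the digits `e` one after the other at the positions satisfying `p`, and `0` at all
other positions. -/
def spreadDigits {b : ℕ} [NeZero b] (p : ℕ → Prop) [DecidablePred p] (e : ℕ → Fin b) (i : ℕ) :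
    Fin b :=
  if p i then e (Nat.count p i) else 0

/-- The map `[0, 1) → [0, 1]` inserting zeros into the base `b` expansion at the positions that do
not satisfy `p`; its image is a Cantor set of numbers with prescribed zero digits. -/
noncomputable def spreadMap (b : ℕ) [NeZero b] (p : ℕ → Prop) [DecidablePred p] (x : ℝ) : ℝ :=
  Real.ofDigits (spreadDigits p (Real.digits x b))

variable {b : ℕ} [NeZero b] {p : ℕ → Prop} [DecidablePred p]

theorem spreadDigits_of_not (e : ℕ → Fin b) {i : ℕ} (hi : ¬ p i) : spreadDigits p e i = 0 :=
  if_neg hi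

theorem eq_of_spreadDigits_eq {e e' : ℕ → Fin b} {m : ℕ}
    (h : ∀ i < m, spreadDigits p e i = spreadDigits p e' i) {k : ℕ} (hk : k < Nat.count p m) :
    e k = e' k := by
  have hfin : ∀ hf : {i | p i}.Finite, k < hf.toFinset.card := fun hf =>
    hk.trans_le (Nat.count_le_card hf m)
  have hnth := h (Nat.nth p k) (Nat.nth_lt_of_lt_count hk)
  simpa only [spreadDigits, if_pos (Nat.nth_mem k hfin), Nat.count_nth hfin] using hnth

theorem abs_sub_le_of_spreadDigits_eq (hb : 1 < b) {x y : ℝ} (hx : x ∈ Set.Ico (0 : ℝ) 1)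
    (hy : y ∈ Set.Ico (0 : ℝ) 1) {m : ℕ} (h : ∀ i < m,
      spreadDigits p (Real.digits x b) i = spreadDigits p (Real.digits y b) i) :
    |x - y| ≤ ((b : ℝ) ^ Nat.count p m)⁻¹ := by
  have hdigits := Real.abs_ofDigits_sub_ofDigits_le fun _ hk => eq_of_spreadDigits_eq h hk
  rwa [Real.ofDigits_digits hb hx, Real.ofDigits_digits hb hy] at hdigits

theorem spreadDigits_digits_injOn (hb : 1 < b) (hp : {i | p i}.Infinite) :
    Set.InjOn (fun x => spreadDigits p (Real.digits x b)) (Set.Ico 0 1) := by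
  intro x hx y hy hxy
  rw [← Real.ofDigits_digits hb hx, ← Real.ofDigits_digits hb hy]
  congr 1
  funext k
  refine eq_of_spreadDigits_eq (p := p) (m := Nat.nth p k + 1) (fun i _ => congrFun hxy i) ?_
  rw [Nat.count_nth_succ_of_infinite hp]
  exact k.lt_succ_self

theorem infinite_of_mul_le_count_add {r c : ℝ} (hr : 0 < r)
    (hgap : ∀ m, ∃ z, m < z ∧ r * z ≤ Nat.count p m + c) : {i | p i}.Infinite := by
  intro hfin
  obtain ⟨m, hm⟩ := exists_nat_ge ((hfin.toFinset.card + c) / r)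
  obtain ⟨z, hmz, hz⟩ := hgap m
  have hcount : (Nat.count p m : ℝ) ≤ hfin.toFinset.card := by
    exact_mod_cast Nat.count_le_card hfin m
  have hlt : r * m < r * z := by gcongr
  rw [div_le_iff₀ hr] at hm
  linarith

/-- The zero position `z` keeps two images apart that first differ in digit `m`. -/
theorem abs_sub_le_mul_abs_spreadMap_sub_rpow (hb : 1 < b) {r c : ℝ} (hr : 0 < r)
    (hgap : ∀ m, ∃ z, m < z ∧ ¬ p z ∧ r * z ≤ Nat.count p m + c) {x y : ℝ}
    (hx : x ∈ Set.Ico (0 : ℝ) 1) (hy : y ∈ Set.Ico (0 : ℝ) 1) :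
    |x - y| ≤ (b : ℝ) ^ (c + r) * |spreadMap b p x - spreadMap b p y| ^ r := by
  have hb0 : (0 : ℝ) < b := by exact_mod_cast NeZero.pos b
  rcases eq_or_ne x y with rfl | hxy
  · simp [Real.zero_rpow hr.ne']
  have hp : {i | p i}.Infinite := infinite_of_mul_le_count_add hr fun m =>
    (hgap m).imp fun _ hz => ⟨hz.1, hz.2.2⟩
  have hdiff : ∃ i, spreadDigits p (Real.digits x b) i ≠ spreadDigits p (Real.digits y b) i :=
    Function.ne_iff.1 ((spreadDigits_digits_injOn hb hp).ne hx hy hxy)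
  set m := Nat.find hdiff
  have hagree : ∀ i < m, spreadDigits p (Real.digits x b) i = spreadDigits p (Real.digits y b) i :=
    fun i hi => not_not.1 (Nat.find_min hdiff hi)
  obtain ⟨z, hmz, hpz, hz⟩ := hgap m
  have hsep := inv_pow_le_abs_ofDigits_sub_ofDigits hagree (Nat.find_spec hdiff) hmz
    (spreadDigits_of_not _ hpz) (spreadDigits_of_not _ hpz)
  calc |x - y| ≤ ((b : ℝ) ^ Nat.count p m)⁻¹ := abs_sub_le_of_spreadDigits_eq hb hx hy hagree
    _ = (b : ℝ) ^ (-(Nat.count p m : ℝ)) := by rw [Real.rpow_neg hb0.le, Real.rpow_natCast]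
    _ ≤ (b : ℝ) ^ (c + r + -((z + 1 : ℕ) : ℝ) * r) := by
        refine Real.rpow_le_rpow_of_exponent_le (by exact_mod_cast hb.le) ?_
        push_cast
        linarith
    _ = (b : ℝ) ^ (c + r) * (((b : ℝ) ^ (z + 1))⁻¹) ^ r := by
        rw [Real.rpow_add hb0, Real.rpow_mul hb0.le, Real.rpow_neg hb0.le, Real.rpow_natCast]
    _ ≤ (b : ℝ) ^ (c + r) * |spreadMap b p x - spreadMap b p y| ^ r := by
        gcongr
        exact hsep

theorem mul_dimH_le_dimH_image {X Y : Type*} [EMetricSpace X] [EMetricSpace Y] {f : X → Y}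
    {s : Set X} {C r : NNReal} (hr : 0 < r)
    (h : ∀ x ∈ s, ∀ y ∈ s, edist x y ≤ C * edist (f x) (f y) ^ (r : ℝ)) :
    r * dimH s ≤ dimH (f '' s) := by
  rcases s.eq_empty_or_nonempty with rfl | ⟨x₀, -⟩
  · simp
  have : Nonempty X := ⟨x₀⟩
  have hinj : Set.InjOn f s := fun x hx y hy hxy => by
    simpa [hxy, hr] using h x hx y hy
  have hleft : Set.LeftInvOn (Function.invFunOn f s) f s := hinj.leftInvOn_invFunOn
  have hholder : HolderOnWith C r (Function.invFunOn f s) (f '' s) := by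
    rintro _ ⟨x, hx, rfl⟩ _ ⟨y, hy, rfl⟩
    rw [hleft hx, hleft hy]
    exact h x hx y hy
  have hdim := hholder.dimH_image_le hr
  rw [hleft.image_image, ENNReal.le_div_iff_mul_le (by simp [hr.ne']) (by simp)] at hdim
  rwa [mul_comm]

theorem one_le_dimH_image_spreadMap (hb : 1 < b)
    (hgap : ∀ r : ℝ, 0 < r → r < 1 →
      ∃ c, ∀ m, ∃ z, m < z ∧ ¬ p z ∧ r * z ≤ Nat.count p m + c) :
    1 ≤ dimH (spreadMap b p '' Set.Ico 0 1) := by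
  refine ENNReal.le_of_forall_nnreal_lt fun r hr => ?_
  rcases eq_zero_or_pos r with rfl | hr0
  · simp
  obtain ⟨c, hc⟩ := hgap r (by exact_mod_cast hr0) (by exact_mod_cast hr)
  have hedist : ∀ x ∈ Set.Ico (0 : ℝ) 1, ∀ y ∈ Set.Ico (0 : ℝ) 1, edist x y ≤
      ((b : ℝ) ^ (c + r)).toNNReal * edist (spreadMap b p x) (spreadMap b p y) ^ (r : ℝ) := by
    intro x hx y hy
    rw [edist_dist, edist_dist, Real.dist_eq, Real.dist_eq,
      ENNReal.ofReal_rpow_of_nonneg (abs_nonneg _) r.coe_nonneg, ← ENNReal.ofReal.eq_1,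
      ← ENNReal.ofReal_mul (by positivity)]
    exact ENNReal.ofReal_le_ofReal
      (abs_sub_le_mul_abs_spreadMap_sub_rpow hb (by exact_mod_cast hr0) hc hx hy)
  simpa [Real.dimH_of_nonempty_interior (s := Set.Ico (0 : ℝ) 1) (by simp [interior_Ico])] using
    mul_dimH_le_dimH_image hr0 hedist

end Spread

section ZeroRuns

/-- The digit positions `⋃ n, [n ^ 3, n ^ 3 + n)` that are forced to vanish. They have density
zero, yet contain a run of length `n` starting at `n ^ 3` for every `n`. -/
def zeroRuns : Set ℕ := ⋃ n : ℕ, Set.Ico (n ^ 3) (n ^ 3 + n)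

theorem mem_zeroRuns {n i : ℕ} (hi : i ∈ Set.Ico (n ^ 3) (n ^ 3 + n)) : i ∈ zeroRuns :=
  Set.mem_iUnion.2 ⟨n, hi⟩

theorem card_filter_mem_zeroRuns_le {n m : ℕ} (hm : m ≤ (n + 1) ^ 3) :
    ((Finset.range m).filter (· ∈ zeroRuns)).card ≤ (n + 1) ^ 2 := by
  have hsub : (Finset.range m).filter (· ∈ zeroRuns) ⊆
      (Finset.range (n + 1)).biUnion fun i => Finset.Ico (i ^ 3) (i ^ 3 + i) := by
    intro k hk
    simp only [zeroRuns, Set.mem_iUnion, Set.mem_Ico, Finset.mem_filter, Finset.mem_range,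
      Finset.mem_biUnion, Finset.mem_Ico] at hk ⊢
    obtain ⟨hkm, i, hi⟩ := hk
    exact ⟨i, lt_of_pow_lt_pow_left₀ 3 (by omega) (by omega), hi⟩
  calc _ ≤ _ := Finset.card_le_card hsub
    _ ≤ (Finset.range (n + 1)).card * (n + 1) :=
        Finset.card_biUnion_le_card_mul _ _ _ fun i hi => by simpa using (Finset.mem_range.1 hi).le
    _ = (n + 1) ^ 2 := by rw [Finset.card_range, sq]

theorem le_count_notMem_zeroRuns_add {n m : ℕ} (hm : m ≤ (n + 1) ^ 3) :
    m ≤ Nat.count (· ∉ zeroRuns) m + (n + 1) ^ 2 := by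
  have hsplit := Finset.card_filter_add_card_filter_not (s := Finset.range m) (· ∈ zeroRuns)
  rw [Finset.card_range] at hsplit
  rw [Nat.count_eq_card_filter_range]
  have := card_filter_mem_zeroRuns_le hm
  omega

theorem exists_cube_le_lt_succ_cube (m : ℕ) : ∃ n, n ^ 3 ≤ m ∧ m < (n + 1) ^ 3 :=
  ⟨Nat.nthRoot 3 m, (Nat.pow_nthRoot_le_iff.2 (Or.inl three_ne_zero)),
    Nat.lt_pow_nthRoot_add_one three_ne_zero m⟩

theorem four_mul_sq_le_mul_cube_add {δ t : ℝ} (hδ : 0 < δ) (ht : 0 ≤ t) :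
    4 * t ^ 2 ≤ δ * t ^ 3 + 64 / δ ^ 2 := by
  rcases le_total 4 (δ * t) with h | h
  · calc 4 * t ^ 2 ≤ δ * t * t ^ 2 := by gcongr
      _ = δ * t ^ 3 := by ring
      _ ≤ δ * t ^ 3 + 64 / δ ^ 2 := le_add_of_nonneg_right (by positivity)
  · calc 4 * t ^ 2 = 4 * (δ * t) ^ 2 / δ ^ 2 := by field_simp
      _ ≤ 4 * 4 ^ 2 / δ ^ 2 := by gcongr
      _ = 64 / δ ^ 2 := by norm_num
      _ ≤ δ * t ^ 3 + 64 / δ ^ 2 := le_add_of_nonneg_left (by positivity)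

theorem exists_mem_zeroRuns_mul_le {r : ℝ} (hr : r < 1) (m : ℕ) :
    ∃ z, m < z ∧ z ∈ zeroRuns ∧
      r * z ≤ Nat.count (· ∉ zeroRuns) m + 64 / (1 - r) ^ 2 := by
  obtain ⟨n, hn, hm⟩ := exists_cube_le_lt_succ_cube m
  refine ⟨(n + 1) ^ 3, hm, mem_zeroRuns ⟨le_rfl, by omega⟩, ?_⟩
  have hcount : (n : ℝ) ^ 3 ≤ Nat.count (· ∉ zeroRuns) m + ((n : ℝ) + 1) ^ 2 := by
    exact_mod_cast hn.trans (le_count_notMem_zeroRuns_add hm.le)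
  have hcube := four_mul_sq_le_mul_cube_add (sub_pos.2 hr) (t := (n : ℝ) + 1) (by positivity)
  push_cast
  nlinarith [(n.cast_nonneg : (0 : ℝ) ≤ n)]

theorem one_le_dimH_image_spreadMap_zeroRuns {b : ℕ} [NeZero b] (hb : 1 < b) :
    1 ≤ dimH (spreadMap b (· ∉ zeroRuns) '' Set.Ico 0 1) :=
  one_le_dimH_image_spreadMap hb fun r _ hr =>
    ⟨64 / (1 - r) ^ 2, fun m => by simpa only [not_not] using exists_mem_zeroRuns_mul_le hr m⟩

theorem dni_spreadMap_zeroRuns_mul_pow_le {b : ℕ} [NeZero b] (x : ℝ) (n : ℕ) :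
    dni (spreadMap b (· ∉ zeroRuns) x * b ^ n ^ 3) ≤ ((b : ℝ) ^ n)⁻¹ :=
  dni_ofDigits_mul_pow_le fun _ hi => spreadDigits_of_not _ (not_not.2 (mem_zeroRuns hi))

end ZeroRuns

section DimensionNPPC

theorem spreadMap_mem_Icc {b : ℕ} [NeZero b] (p : ℕ → Prop) [DecidablePred p] (x : ℝ) :
    spreadMap b p x ∈ Set.Icc (0 : ℝ) 1 :=
  ⟨Real.ofDigits_nonneg _, Real.ofDigits_le_one _⟩

theorem not_hasPPC_spreadMap_zeroRuns {a : ℕ → ℕ} {b : ℕ} [NeZero b] {δ : ℝ} (hδ : 0 < δ)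
    (h : ∃ᶠ N : ℕ in atTop, ∃ L ⊆ Finset.Icc 1 N, δ * N ≤ L.card ∧
      ∀ n ∈ L, N ≤ b ^ n ∧ a n = b ^ n ^ 3) (x : ℝ) :
    ¬ hasPPC a (spreadMap b (· ∉ zeroRuns) x) := by
  refine not_hasPPC_of_frequently_cluster hδ zero_le_one
    ((h.and_eventually (eventually_gt_atTop 0)).mono ?_)
  rintro N ⟨⟨L, hL, hcard, hval⟩, hN⟩
  refine ⟨L, hL, hcard, fun n hn => ?_⟩
  obtain ⟨hNn, han⟩ := hval n hn
  calc dni (spreadMap b (· ∉ zeroRuns) x * a n)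
      = dni (spreadMap b (· ∉ zeroRuns) x * b ^ n ^ 3) := by rw [han, Nat.cast_pow]
    _ ≤ ((b : ℝ) ^ n)⁻¹ := dni_spreadMap_zeroRuns_mul_pow_le x n
    _ ≤ (N : ℝ)⁻¹ := inv_anti₀ (by exact_mod_cast hN) (by exact_mod_cast hNn)
    _ = 1 / N := (one_div _).symm

theorem dimH_NPPC_eq_one {a : ℕ → ℕ} {b : ℕ} (hb : 1 < b) {δ : ℝ} (hδ : 0 < δ)
    (h : ∃ᶠ N : ℕ in atTop, ∃ L ⊆ Finset.Icc 1 N, δ * N ≤ L.card ∧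
      ∀ n ∈ L, N ≤ b ^ n ∧ a n = b ^ n ^ 3) :
    dimH (NPPC a) = 1 := by
  have : NeZero b := ⟨by omega⟩
  refine le_antisymm ((dimH_mono (Set.subset_univ _)).trans_eq Real.dimH_univ) ?_
  have hsub : spreadMap b (· ∉ zeroRuns) '' Set.Ico 0 1 ⊆ NPPC a ∪ {0, 1} := by
    rintro _ ⟨x, -, rfl⟩
    rcases Set.eq_endpoints_or_mem_Ioo_of_mem_Icc (spreadMap_mem_Icc (b := b) (· ∉ zeroRuns) x) with
      h0 | h1 | hmem
    · exact Or.inr (Or.inl h0)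
    · exact Or.inr (Or.inr h1)
    · exact Or.inl ⟨hmem, not_hasPPC_spreadMap_zeroRuns hδ h x⟩
  calc 1 ≤ dimH (spreadMap b (· ∉ zeroRuns) '' Set.Ico 0 1) :=
        one_le_dimH_image_spreadMap_zeroRuns hb
    _ ≤ dimH (NPPC a ∪ {0, 1}) := dimH_mono hsub
    _ = dimH (NPPC a) := by
        rw [dimH_union, (Set.toFinite ({0, 1} : Set ℝ)).dimH_zero, max_eq_left zero_le]

end DimensionNPPC

section AdditiveEnergy

theorem addEnergy_eq_finset_addEnergy (A : Finset ℕ) : addEnergy A = Finset.addEnergy A A :=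
  (Finset.addEnergy_eq_card_filter A A).symm

theorem addEnergy_mono {A B : Finset ℕ} (h : A ⊆ B) : addEnergy A ≤ addEnergy B := by
  simpa only [addEnergy_eq_finset_addEnergy] using Finset.addEnergy_mono h h

theorem addEnergy_le_card_pow_three (B : Finset ℕ) : addEnergy B ≤ B.card ^ 3 := by
  calc addEnergy B ≤ (B ×ˢ B ×ˢ B).card := by
        refine Finset.card_le_card_of_injOn (fun q => (q.1.1, q.1.2, q.2.1)) ?_ ?_
        · intro q hq
          simp only [Finset.coe_filter, Finset.mem_product, Set.mem_ofPred_eq] at hq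
          simp [hq]
        · rintro ⟨⟨k, l⟩, p, q⟩ hx ⟨⟨k', l'⟩, p', q'⟩ hy hxy
          simp only [Finset.coe_filter, Set.mem_ofPred_eq] at hx hy
          simp only [Prod.mk.injEq] at hxy ⊢
          omega
    _ = B.card ^ 3 := by simp only [Finset.card_product]; ring

open scoped Pointwise in
/-- Cauchy–Schwarz: the sumset of a progression is only twice as long. -/
theorem pow_three_le_two_mul_addEnergy_image {D : ℕ} (hD : D ≠ 0) (m : ℕ) :
    m ^ 3 ≤ 2 * addEnergy ((Finset.Icc 1 m).image (D * ·)) := by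
  set P := (Finset.Icc 1 m).image (D * ·) with hP
  have hcard : P.card = m := by
    rw [hP, Finset.card_image_of_injective _ (mul_right_injective₀ hD), Nat.card_Icc,
      Nat.add_sub_cancel]
  have hsum : (P + P).card ≤ 2 * m := by
    have hsub : P + P ⊆ (Finset.Icc 1 (2 * m)).image (D * ·) := by
      simp only [hP, Finset.add_subset_iff, Finset.mem_image, Finset.mem_Icc]
      rintro _ ⟨x, hx, rfl⟩ _ ⟨y, hy, rfl⟩
      exact ⟨x + y, by omega, mul_add _ _ _⟩
    simpa using (Finset.card_le_card hsub).trans Finset.card_image_le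
  rcases m.eq_zero_or_pos with rfl | hm
  · simp
  refine le_of_mul_le_mul_left (a := m) ?_ hm
  calc m * m ^ 3 = P.card ^ 2 * P.card ^ 2 := by rw [hcard]; ring
    _ ≤ (P + P).card * Finset.addEnergy P P := Finset.le_card_add_mul_addEnergy P P
    _ ≤ 2 * m * addEnergy P := by rw [addEnergy_eq_finset_addEnergy]; gcongr
    _ = m * (2 * addEnergy P) := by ring

theorem addEnergy_image_le_card_filter (a : ℕ → ℕ) (I : Finset ℕ) :
    addEnergy (I.image a) ≤
      (((I ×ˢ I) ×ˢ (I ×ˢ I)).filter fun q => a q.1.1 + a q.1.2 = a q.2.1 + a q.2.2).card := by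
  refine (Finset.card_le_card ?_).trans
    (Finset.card_image_le (f := Prod.map (Prod.map a a) (Prod.map a a)))
  rintro ⟨⟨x, y⟩, z, w⟩ hx
  simp only [Finset.mem_filter, Finset.mem_product, Finset.mem_image] at hx
  obtain ⟨⟨⟨⟨k, hk, rfl⟩, l, hl, rfl⟩, ⟨p, hp, rfl⟩, q, hq, rfl⟩, h⟩ := hx
  exact Finset.mem_image.2 ⟨((k, l), p, q), by simp [hk, hl, hp, hq, h], rfl⟩

theorem addEnergy_image_le_of_forall {ι : Type*} {a : ℕ → ℕ} {I : Finset ℕ} {s : Finset ι}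
    {B : ι → Finset ℕ}
    (h : ∀ k ∈ I, ∀ l ∈ I, ∀ p ∈ I, ∀ q ∈ I, a k + a l = a p + a q →
      (k = p ∧ l = q) ∨ (k = q ∧ l = p) ∨
        ∃ j ∈ s, (k ∈ B j ∧ l ∈ B j ∧ p ∈ B j ∧ q ∈ B j) ∧ k + l = p + q) :
    addEnergy (I.image a) ≤ 2 * I.card ^ 2 + ∑ j ∈ s, (B j).card ^ 3 := by
  set T := (I ×ˢ I).image fun x => (x, x)
  set S := (I ×ˢ I).image fun x => (x, x.swap)
  set P := s.biUnion fun j => ((B j ×ˢ B j) ×ˢ (B j ×ˢ B j)).filter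
    fun q => q.1.1 + q.1.2 = q.2.1 + q.2.2
  have hsub : (((I ×ˢ I) ×ˢ (I ×ˢ I)).filter fun q => a q.1.1 + a q.1.2 = a q.2.1 + a q.2.2) ⊆
      (T ∪ S) ∪ P := by
    rintro ⟨⟨k, l⟩, p, q⟩ hx
    simp only [Finset.mem_filter, Finset.mem_product] at hx
    obtain ⟨⟨⟨hk, hl⟩, hp, hq⟩, heq⟩ := hx
    rcases h k hk l hl p hp q hq heq with ⟨rfl, rfl⟩ | ⟨rfl, rfl⟩ | ⟨j, hj, hB, hadd⟩
    · simp [T, hk, hl]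
    · simp [S, hk, hl]
    · refine Finset.mem_union_right _ (Finset.mem_biUnion.2 ⟨j, hj, ?_⟩)
      simpa [hadd, and_assoc] using hB
  have hT : T.card ≤ I.card ^ 2 := by
    simpa [sq] using Finset.card_image_le (s := I ×ˢ I) (f := fun x => (x, x))
  have hS : S.card ≤ I.card ^ 2 := by
    simpa [sq] using Finset.card_image_le (s := I ×ˢ I) (f := fun x => (x, x.swap))
  have hP : P.card ≤ ∑ j ∈ s, (B j).card ^ 3 := Finset.card_biUnion_le.trans
    (Finset.sum_le_sum fun j _ => addEnergy_le_card_pow_three (B j))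
  calc addEnergy (I.image a) ≤ _ := addEnergy_image_le_card_filter a I
    _ ≤ ((T ∪ S) ∪ P).card := Finset.card_le_card hsub
    _ ≤ T.card + S.card + P.card :=
        (Finset.card_union_le _ _).trans (Nat.add_le_add_right (Finset.card_union_le _ _) _)
    _ ≤ 2 * I.card ^ 2 + ∑ j ∈ s, (B j).card ^ 3 := by omega

end AdditiveEnergy

section BlockSequence

/-- In the index block `[2 ^ j, 2 ^ (j + 1))`, an arithmetic progression of length `M j` with
common difference `2 ^ (2 ^ j) ^ 3`, which carries the additive energy, followed by the very sparse
terms `2 ^ n ^ 3`, which cluster modulo one after multiplication by a number with zero digits on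
`zeroRuns`. -/
def blockSeq (M : ℕ → ℕ) (n : ℕ) : ℕ :=
  if n < 2 ^ Nat.log 2 n + M (Nat.log 2 n) then
    2 ^ (2 ^ Nat.log 2 n) ^ 3 * (n - 2 ^ Nat.log 2 n + 1)
  else 2 ^ n ^ 3

/-- The indices of the arithmetic progression in the `j`-th block of `blockSeq M`. -/
abbrev progIdx (M : ℕ → ℕ) (j : ℕ) : Finset ℕ := Finset.Ico (2 ^ j) (2 ^ j + M j)

variable {M : ℕ → ℕ}

theorem blockSeq_of_mem_progIdx (hM : ∀ j, M j ≤ 2 ^ j) {j n : ℕ} (hn : n ∈ progIdx M j) :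
    blockSeq M n = 2 ^ (2 ^ j) ^ 3 * (n - 2 ^ j + 1) := by
  rw [Finset.mem_Ico] at hn
  have hlog : Nat.log 2 n = j :=
    Nat.log_eq_of_pow_le_of_lt_pow hn.1 (by have := hM j; rw [pow_succ]; omega)
  rw [blockSeq, hlog, if_pos hn.2]

theorem blockSeq_of_mem_Ico {j n : ℕ} (hn : n ∈ Finset.Ico (2 ^ j + M j) (2 ^ (j + 1))) :
    blockSeq M n = 2 ^ n ^ 3 := by
  rw [Finset.mem_Ico] at hn
  have hlog : Nat.log 2 n = j := Nat.log_eq_of_pow_le_of_lt_pow (by omega) hn.2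
  rw [blockSeq, hlog, if_neg (not_lt.2 hn.1)]

/-- The first term of a progression is also of the form `2 ^ n ^ 3`. -/
theorem blockSeq_eq_or_exists_mem_progIdx (M : ℕ → ℕ) {n : ℕ} (hn : 1 ≤ n) :
    blockSeq M n = 2 ^ n ^ 3 ∨ ∃ j, 2 ^ j < n ∧ n ∈ progIdx M j := by
  have hle := Nat.pow_log_le_self 2 (Nat.one_le_iff_ne_zero.1 hn)
  by_cases h : n < 2 ^ Nat.log 2 n + M (Nat.log 2 n)
  · rcases hle.eq_or_lt with heq | hlt
    · left
      rw [blockSeq, if_pos h, heq, Nat.sub_self, zero_add, mul_one]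
    · exact Or.inr ⟨_, hlt, Finset.mem_Ico.2 ⟨hle, h⟩⟩
  · exact Or.inl (if_neg h)

theorem blockSeq_pos (M : ℕ → ℕ) (n : ℕ) : 0 < blockSeq M n := by
  unfold blockSeq
  split_ifs <;> positivity

theorem blockSeq_le (hM : ∀ j, M j ≤ 2 ^ j) {n : ℕ} (hn : 1 ≤ n) :
    blockSeq M n ≤ 2 ^ n ^ 3 := by
  rcases blockSeq_eq_or_exists_mem_progIdx M hn with h | ⟨j, hlt, hj⟩
  · exact h.le
  obtain ⟨r, rfl⟩ := Nat.exists_eq_add_of_le hlt.le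
  have hexp : (2 ^ j) ^ 3 + r ≤ (2 ^ j + r) ^ 3 := by
    have hsq : r ≤ 3 * (2 ^ j) ^ 2 * r := Nat.le_mul_of_pos_left _ (by positivity)
    calc (2 ^ j) ^ 3 + r ≤ (2 ^ j) ^ 3 + 3 * (2 ^ j) ^ 2 * r + (3 * 2 ^ j * r ^ 2 + r ^ 3) := by
          omega
      _ = (2 ^ j + r) ^ 3 := by ring
  calc blockSeq M (2 ^ j + r) = 2 ^ (2 ^ j) ^ 3 * (r + 1) := by
        rw [blockSeq_of_mem_progIdx hM hj, Nat.add_sub_cancel_left]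
    _ ≤ 2 ^ (2 ^ j) ^ 3 * 2 ^ r := Nat.mul_le_mul_left _ Nat.lt_two_pow_self
    _ = 2 ^ ((2 ^ j) ^ 3 + r) := (pow_add _ _ _).symm
    _ ≤ 2 ^ (2 ^ j + r) ^ 3 := Nat.pow_le_pow_right two_pos hexp

theorem two_mul_blockSeq_le (hM : ∀ j, M j ≤ 2 ^ j) {x y : ℕ} (hx : 1 ≤ x) (hxy : x < y) :
    2 * blockSeq M x ≤ 2 ^ y ^ 3 := by
  calc 2 * blockSeq M x ≤ 2 * 2 ^ x ^ 3 := Nat.mul_le_mul_left _ (blockSeq_le hM hx)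
    _ = 2 ^ (x ^ 3 + 1) := (pow_succ' _ _).symm
    _ ≤ 2 ^ y ^ 3 := Nat.pow_le_pow_right two_pos (Nat.pow_lt_pow_left hxy three_ne_zero)

theorem blockSeq_lt_blockSeq_succ (hM : ∀ j, M j ≤ 2 ^ j) {n : ℕ} (hn : 1 ≤ n) :
    blockSeq M n < blockSeq M (n + 1) := by
  rcases blockSeq_eq_or_exists_mem_progIdx M (Nat.le_add_left 1 n) with h | ⟨j, hlt, hj⟩
  · have := two_mul_blockSeq_le hM hn (lt_add_one n)
    have := blockSeq_pos M n
    omega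
  · have hn' : n ∈ progIdx M j := by
      rw [Finset.mem_Ico] at hj ⊢
      omega
    rw [blockSeq_of_mem_progIdx hM hj, blockSeq_of_mem_progIdx hM hn']
    exact Nat.mul_lt_mul_of_pos_left (by omega) (by positivity)

theorem blockSeq_strictMonoOn (hM : ∀ j, M j ≤ 2 ^ j) :
    StrictMonoOn (blockSeq M) (Set.Ici 1) :=
  strictMonoOn_of_lt_add_one Set.ordConnected_Ici fun _ _ hn _ => blockSeq_lt_blockSeq_succ hM hn

theorem blockSeq_eq_add_mul_sub (hM : ∀ j, M j ≤ 2 ^ j) {j k p : ℕ} (hk : k ∈ progIdx M j)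
    (hp : p ∈ progIdx M j) (hpk : p ≤ k) :
    blockSeq M k = blockSeq M p + 2 ^ (2 ^ j) ^ 3 * (k - p) := by
  rw [blockSeq_of_mem_progIdx hM hk, blockSeq_of_mem_progIdx hM hp, ← mul_add]
  rw [Finset.mem_Ico] at hk hp
  congr 1
  omega

/-- Everything before a progression of difference `D` lies below `D / 2`; comparing sizes puts `p`,
then `q`, and finally, as its term is a multiple of `D`, also `l` into the progression of `k`. -/
theorem exists_mem_progIdx_of_add_eq (hM : ∀ j, M j ≤ 2 ^ j) {k l p q : ℕ} (hl : 1 ≤ l)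
    (hq : 1 ≤ q) (hqp : q ≤ p) (hpk : p < k)
    (h : blockSeq M k + blockSeq M l = blockSeq M p + blockSeq M q) :
    ∃ j, k ∈ progIdx M j ∧ l ∈ progIdx M j ∧ p ∈ progIdx M j ∧ q ∈ progIdx M j := by
  have hmono := blockSeq_strictMonoOn hM
  have hp : 1 ≤ p := hq.trans hqp
  have hqple : blockSeq M q ≤ blockSeq M p := hmono.monotoneOn hq hp hqp
  have hlpos := blockSeq_pos M l
  rcases blockSeq_eq_or_exists_mem_progIdx M (hp.trans hpk.le) with hk | ⟨j, -, hk⟩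
  · have := two_mul_blockSeq_le hM hp hpk
    omega
  refine ⟨j, hk, ?_⟩
  set D := 2 ^ (2 ^ j) ^ 3
  have hDpos : 0 < D := by positivity
  have mem_of_large : ∀ x, 1 ≤ x → x < k → D < 2 * blockSeq M x → x ∈ progIdx M j := by
    intro x hx hxk hlarge
    refine Finset.mem_Ico.2 ⟨?_, hxk.trans (Finset.mem_Ico.1 hk).2⟩
    by_contra! hxj
    exact hlarge.not_ge (two_mul_blockSeq_le hM hx hxj)
  have hDk : D ≤ blockSeq M k := by
    rw [blockSeq_of_mem_progIdx hM hk]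
    exact Nat.le_mul_of_pos_right _ (Nat.succ_pos _)
  have hpj : p ∈ progIdx M j := mem_of_large p hp hpk (by omega)
  have hkp : blockSeq M k = blockSeq M p + D * (k - p) :=
    blockSeq_eq_add_mul_sub hM hk hpj hpk.le
  have hql : blockSeq M q = blockSeq M l + D * (k - p) := by omega
  have hDkp : D ≤ D * (k - p) := Nat.le_mul_of_pos_right _ (Nat.sub_pos_of_lt hpk)
  have hqj : q ∈ progIdx M j := mem_of_large q hq (by omega) (by omega)
  have hlq : l < q := (hmono.lt_iff_lt hl hq).1 (by omega)
  have hdvd : D ∣ blockSeq M l := by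
    rw [← Nat.dvd_add_left (Dvd.intro (k - p) rfl), ← hql, blockSeq_of_mem_progIdx hM hqj]
    exact Dvd.intro _ rfl
  have hDl := Nat.le_of_dvd hlpos hdvd
  exact ⟨mem_of_large l hl (by omega) (by omega), hpj, hqj⟩

theorem eq_or_exists_mem_progIdx_of_add_eq (hM : ∀ j, M j ≤ 2 ^ j) {k l p q : ℕ} (hk : 1 ≤ k)
    (hl : 1 ≤ l) (hp : 1 ≤ p) (hq : 1 ≤ q)
    (h : blockSeq M k + blockSeq M l = blockSeq M p + blockSeq M q) :
    (k = p ∧ l = q) ∨ (k = q ∧ l = p) ∨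
      ∃ j, k ∈ progIdx M j ∧ l ∈ progIdx M j ∧ p ∈ progIdx M j ∧ q ∈ progIdx M j := by
  wlog hlk : l ≤ k generalizing k l
  · have := this hl hk (by omega) (le_of_not_ge hlk)
    tauto
  wlog hqp : q ≤ p generalizing p q
  · have := this hq hp (by omega) (le_of_not_ge hqp)
    tauto
  wlog hpk : p ≤ k generalizing k l p q
  · have := this hp hq hqp hk hl h.symm hlk (le_of_not_ge hpk)
    grind
  rcases hpk.eq_or_lt with rfl | hpk
  · exact Or.inl ⟨rfl, (blockSeq_strictMonoOn hM).injOn hl hq (by omega)⟩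
  · exact Or.inr (Or.inr (exists_mem_progIdx_of_add_eq hM hl hq hqp hpk h))

theorem add_eq_of_mem_progIdx (hM : ∀ j, M j ≤ 2 ^ j) {j k l p q : ℕ} (hk : k ∈ progIdx M j)
    (hl : l ∈ progIdx M j) (hp : p ∈ progIdx M j) (hq : q ∈ progIdx M j)
    (h : blockSeq M k + blockSeq M l = blockSeq M p + blockSeq M q) : k + l = p + q := by
  rw [blockSeq_of_mem_progIdx hM hk, blockSeq_of_mem_progIdx hM hl,
    blockSeq_of_mem_progIdx hM hp, blockSeq_of_mem_progIdx hM hq, ← mul_add, ← mul_add] at h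
  have := Nat.eq_of_mul_eq_mul_left (by positivity) h
  simp only [Finset.mem_Ico] at hk hl hp hq
  omega

theorem addEnergy_trunc_blockSeq_le (hM : ∀ j, M j ≤ 2 ^ j) (N : ℕ) :
    addEnergy (trunc (blockSeq M) N) ≤
      2 * N ^ 2 + ∑ j ∈ Finset.range (Nat.log 2 N + 1), M j ^ 3 := by
  have hsol : ∀ k ∈ Finset.Icc 1 N, ∀ l ∈ Finset.Icc 1 N, ∀ p ∈ Finset.Icc 1 N,
      ∀ q ∈ Finset.Icc 1 N, blockSeq M k + blockSeq M l = blockSeq M p + blockSeq M q →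
      (k = p ∧ l = q) ∨ (k = q ∧ l = p) ∨ ∃ j ∈ Finset.range (Nat.log 2 N + 1),
        (k ∈ progIdx M j ∧ l ∈ progIdx M j ∧ p ∈ progIdx M j ∧ q ∈ progIdx M j) ∧
          k + l = p + q := by
    intro k hk l hl p hp q hq h
    rw [Finset.mem_Icc] at hk hl hp hq
    refine (eq_or_exists_mem_progIdx_of_add_eq hM hk.1 hl.1 hp.1 hq.1 h).imp_right
      (Or.imp_right ?_)
    rintro ⟨j, hkj, hlj, hpj, hqj⟩
    have hjN : 2 ^ j ≤ N := (Finset.mem_Ico.1 hkj).1.trans hk.2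
    exact ⟨j, Finset.mem_range_succ_iff.2 (Nat.le_log_of_pow_le one_lt_two hjN),
      ⟨hkj, hlj, hpj, hqj⟩, add_eq_of_mem_progIdx hM hkj hlj hpj hqj h⟩
  simpa [trunc] using addEnergy_image_le_of_forall hsol

theorem pow_three_le_two_mul_addEnergy_trunc_blockSeq (hM : ∀ j, M j ≤ 2 ^ j) {j N : ℕ}
    (hN : 2 ^ j + M j ≤ N + 1) :
    M j ^ 3 ≤ 2 * addEnergy (trunc (blockSeq M) N) := by
  refine (pow_three_le_two_mul_addEnergy_image (D := 2 ^ (2 ^ j) ^ 3) (by positivity) _).trans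
    (Nat.mul_le_mul_left 2 (addEnergy_mono ?_))
  intro x hx
  obtain ⟨r, hr, rfl⟩ := Finset.mem_image.1 hx
  rw [Finset.mem_Icc] at hr
  have hpow : 0 < 2 ^ j := by positivity
  refine Finset.mem_image.2 ⟨2 ^ j + (r - 1), Finset.mem_Icc.2 (by omega), ?_⟩
  rw [blockSeq_of_mem_progIdx (j := j) hM (Finset.mem_Ico.2 (by omega)), Nat.add_sub_cancel_left,
    Nat.sub_add_cancel hr.1]

theorem dimH_NPPC_blockSeq (hM : ∃ᶠ j in atTop, 2 * M j ≤ 2 ^ j) :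
    dimH (NPPC (blockSeq M)) = 1 := by
  refine dimH_NPPC_eq_one one_lt_two (δ := 1 / 4) (by norm_num) ?_
  refine ((tendsto_pow_atTop_atTop_of_one_lt one_lt_two).comp (tendsto_add_atTop_nat 1)).frequently
    (hM.mono fun j hj => ?_)
  refine ⟨Finset.Ico (2 ^ j + M j) (2 ^ (j + 1)), fun n hn => ?_, ?_, fun n hn =>
    ⟨?_, blockSeq_of_mem_Ico hn⟩⟩
  · rw [Finset.mem_Ico] at hn
    exact Finset.mem_Icc.2 ⟨by omega, hn.2.le⟩
  · have hcard : 2 ^ (j + 1) ≤ 4 * (Finset.Ico (2 ^ j + M j) (2 ^ (j + 1))).card := by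
      rw [Nat.card_Ico, pow_succ]
      omega
    have : ((2 ^ (j + 1) : ℕ) : ℝ) ≤ 4 * (Finset.Ico (2 ^ j + M j) (2 ^ (j + 1))).card := by
      exact_mod_cast hcard
    simp only [Function.comp_apply]
    linarith
  · have hjn : j + 1 ≤ n := by
      have := Nat.lt_two_pow_self (n := j)
      have := (Finset.mem_Ico.1 hn).1
      omega
    exact Nat.pow_le_pow_right two_pos hjn

end BlockSequence

section ProgressionLength

/-- The length of the arithmetic progression in the `j`-th block. Its cube, which is the energy the
block contributes, is of order `8 ^ j / u j`; the normalization by `u 0` keeps the progression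
within the first half of the block. -/
noncomputable def progLength (u : ℕ → ℝ) (j : ℕ) : ℕ :=
  ⌈(2 : ℝ) ^ j / 2 * (u 0 / u j) ^ (1 / 3 : ℝ)⌉₊

variable {u : ℕ → ℝ}

theorem progLength_bound_le (hpos : ∀ j, 0 < u j) (hmono : Monotone u) (j : ℕ) :
    (2 : ℝ) ^ j / 2 * (u 0 / u j) ^ (1 / 3 : ℝ) ≤ 2 ^ j / 2 :=
  mul_le_of_le_one_right (by positivity) (Real.rpow_le_one (div_pos (hpos 0) (hpos j)).le
    (div_le_one_of_le₀ (hmono j.zero_le) (hpos j).le) (by norm_num))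

theorem progLength_le (hpos : ∀ j, 0 < u j) (hmono : Monotone u) (j : ℕ) :
    progLength u j ≤ 2 ^ j := by
  refine Nat.ceil_le.2 ((progLength_bound_le hpos hmono j).trans ?_)
  push_cast
  exact half_le_self (by positivity)

theorem two_mul_progLength_le (hpos : ∀ j, 0 < u j) (hmono : Monotone u) {j : ℕ} (hj : j ≠ 0) :
    2 * progLength u j ≤ 2 ^ j := by
  obtain ⟨i, rfl⟩ := Nat.exists_eq_succ_of_ne_zero hj
  have hle : progLength u (i + 1) ≤ 2 ^ i := by
    refine Nat.ceil_le.2 ((progLength_bound_le hpos hmono (i + 1)).trans_eq ?_)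
    rw [pow_succ, mul_div_cancel_right₀ _ two_ne_zero]
    push_cast
    rfl
  rw [Nat.succ_eq_add_one, pow_succ']
  exact Nat.mul_le_mul_left 2 hle

theorem progLength_bound_pow_three (hpos : ∀ j, 0 < u j) (j : ℕ) :
    ((2 : ℝ) ^ j / 2 * (u 0 / u j) ^ (1 / 3 : ℝ)) ^ 3 = u 0 / 8 * (8 ^ j / u j) := by
  have hroot : ((u 0 / u j) ^ (1 / 3 : ℝ)) ^ 3 = u 0 / u j := by
    rw [← Real.rpow_natCast, ← Real.rpow_mul (div_pos (hpos 0) (hpos j)).le]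
    norm_num
  have hcube : ((2 : ℝ) ^ j) ^ 3 = 8 ^ j := by rw [pow_right_comm]; norm_num
  rw [mul_pow, hroot, div_pow, hcube]
  ring

theorem le_progLength_pow_three (hpos : ∀ j, 0 < u j) (j : ℕ) :
    u 0 / 8 * (8 ^ j / u j) ≤ (progLength u j : ℝ) ^ 3 := by
  rw [← progLength_bound_pow_three hpos]
  have := (div_pos (hpos 0) (hpos j)).le
  gcongr
  exact Nat.le_ceil _

theorem progLength_pow_three_le (hpos : ∀ j, 0 < u j) (j : ℕ) :
    (progLength u j : ℝ) ^ 3 ≤ u 0 / 2 * (8 ^ j / u j) + 4 := by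
  have hbound := progLength_bound_pow_three hpos j
  have := (div_pos (hpos 0) (hpos j)).le
  set x := (2 : ℝ) ^ j / 2 * (u 0 / u j) ^ (1 / 3 : ℝ)
  have hx : 0 ≤ x := by positivity
  calc (progLength u j : ℝ) ^ 3 ≤ (x + 1) ^ 3 := by gcongr; exact (Nat.ceil_lt_add_one hx).le
    _ ≤ 2 ^ (3 - 1) * (x ^ 3 + 1 ^ 3) := add_pow_le hx zero_le_one 3
    _ = u 0 / 2 * (8 ^ j / u j) + 4 := by rw [hbound]; ring

theorem exists_sum_range_succ_le_mul {t : ℕ → ℝ} (hpos : ∀ j, 0 < t j) {θ : ℝ} (hθ : θ < 1)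
    (h : ∀ᶠ j in atTop, t j ≤ θ * t (j + 1)) :
    ∃ C : ℝ, 0 < C ∧ ∀ J, ∑ j ∈ Finset.range (J + 1), t j ≤ C * t J := by
  obtain ⟨i, hi⟩ := eventually_atTop.1 h
  set S : ℕ → ℝ := fun J => ∑ j ∈ Finset.range (J + 1), t j
  have hS : ∀ J, 0 ≤ S J / t J := fun J =>
    div_nonneg (Finset.sum_nonneg fun j _ => (hpos j).le) (hpos J).le
  have hθ' : 0 < 1 - θ := sub_pos.2 hθ
  set C := 1 / (1 - θ) + ∑ J ∈ Finset.range (i + 1), S J / t J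
  have hCθ : 1 / (1 - θ) ≤ C := le_add_of_nonneg_right (Finset.sum_nonneg fun J _ => hS J)
  have hC : 0 < C := (one_div_pos.2 hθ').trans_le hCθ
  have hstart : ∀ J ≤ i, S J ≤ C * t J := fun J hJ => by
    rw [← div_le_iff₀ (hpos J)]
    exact (Finset.single_le_sum (f := fun J => S J / t J) (fun J _ => hS J)
      (Finset.mem_range_succ_iff.2 hJ)).trans (le_add_of_nonneg_left (by positivity))
  refine ⟨C, hC, fun J => ?_⟩
  rcases le_total J i with hJ | hJ
  · exact hstart J hJ
  induction J, hJ using Nat.le_induction with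
  | base => exact hstart i le_rfl
  | succ J hJ ih =>
    rw [div_le_iff₀ hθ'] at hCθ
    calc S (J + 1) = S J + t (J + 1) := Finset.sum_range_succ _ _
      _ ≤ C * (θ * t (J + 1)) + C * (1 - θ) * t (J + 1) :=
          add_le_add (ih.trans (by gcongr; exact hi J hJ))
            (le_mul_of_one_le_left (hpos _).le hCθ)
      _ = C * t (J + 1) := by ring

theorem eight_pow_log_le {N : ℕ} (hN : N ≠ 0) : (8 : ℝ) ^ Nat.log 2 N ≤ (N : ℝ) ^ 3 := by
  have hlog : (2 : ℝ) ^ Nat.log 2 N ≤ N := by exact_mod_cast Nat.pow_log_le_self 2 hN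
  calc (8 : ℝ) ^ Nat.log 2 N = (2 ^ Nat.log 2 N) ^ 3 := by rw [pow_right_comm]; norm_num
    _ ≤ (N : ℝ) ^ 3 := by gcongr

theorem exists_addEnergy_trunc_le (hpos : ∀ j, 0 < u j) (hmono : Monotone u) {K : ℝ} (hK : K < 8)
    (h : ∀ᶠ j in atTop, u (j + 1) ≤ K * u j) :
    ∃ C : ℝ, 0 < C ∧ ∀ N : ℕ, N ≠ 0 →
      (addEnergy (trunc (blockSeq (progLength u)) N) : ℝ) ≤
        6 * N ^ 2 + C * (N ^ 3 / u (Nat.log 2 N)) := by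
  obtain ⟨C, hC, hsum⟩ := exists_sum_range_succ_le_mul (t := fun j => 8 ^ j / u j)
    (fun j => div_pos (by positivity) (hpos j)) (show K / 8 < 1 by linarith) <|
    h.mono fun j hj => by
      rw [mul_div_assoc', div_le_div_iff₀ (hpos j) (hpos (j + 1))]
      calc 8 ^ j * u (j + 1) ≤ 8 ^ j * (K * u j) := by gcongr
        _ = K / 8 * 8 ^ (j + 1) * u j := by ring
  have hu0 := hpos 0
  refine ⟨u 0 / 2 * C, by positivity, fun N hN => ?_⟩
  have huN := hpos (Nat.log 2 N)
  have hlogN : ((Nat.log 2 N + 1 : ℕ) : ℝ) ≤ N ^ 2 := by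
    exact_mod_cast (Nat.log_lt_self 2 hN).trans_le (Nat.le_self_pow two_ne_zero N)
  have hcubes : ∑ j ∈ Finset.range (Nat.log 2 N + 1), (progLength u j : ℝ) ^ 3 ≤
      u 0 / 2 * C * (N ^ 3 / u (Nat.log 2 N)) + 4 * N ^ 2 := by
    calc ∑ j ∈ Finset.range (Nat.log 2 N + 1), (progLength u j : ℝ) ^ 3
        ≤ ∑ j ∈ Finset.range (Nat.log 2 N + 1), (u 0 / 2 * (8 ^ j / u j) + 4) :=
          Finset.sum_le_sum fun j _ => progLength_pow_three_le hpos j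
      _ = u 0 / 2 * ∑ j ∈ Finset.range (Nat.log 2 N + 1), 8 ^ j / u j
            + 4 * (Nat.log 2 N + 1 : ℕ) := by
          rw [Finset.sum_add_distrib, ← Finset.mul_sum, Finset.sum_const, Finset.card_range,
            nsmul_eq_mul, mul_comm (4 : ℝ)]
      _ ≤ u 0 / 2 * (C * (8 ^ Nat.log 2 N / u (Nat.log 2 N))) + 4 * N ^ 2 := by
          gcongr
          exact hsum _
      _ ≤ u 0 / 2 * (C * (N ^ 3 / u (Nat.log 2 N))) + 4 * N ^ 2 := by
          gcongr
          exact eight_pow_log_le hN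
      _ = _ := by rw [mul_assoc]
  calc (addEnergy (trunc (blockSeq (progLength u)) N) : ℝ)
      ≤ 2 * N ^ 2 + ∑ j ∈ Finset.range (Nat.log 2 N + 1), (progLength u j : ℝ) ^ 3 := by
        exact_mod_cast addEnergy_trunc_blockSeq_le (progLength_le hpos hmono) N
    _ ≤ _ := by linarith

/-- The progression of the last complete block already carries the energy. -/
theorem le_addEnergy_trunc (hpos : ∀ j, 0 < u j) (hmono : Monotone u) {N : ℕ} (hN : 2 ≤ N) :
    u 0 / 1024 * (N ^ 3 / u (Nat.log 2 N)) ≤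
      (addEnergy (trunc (blockSeq (progLength u)) N) : ℝ) := by
  obtain ⟨j, hj⟩ : ∃ j, Nat.log 2 N = j + 1 :=
    Nat.exists_eq_succ_of_ne_zero (Nat.log_pos one_lt_two hN).ne'
  have hjN : 2 ^ (j + 1) ≤ N := hj ▸ Nat.pow_log_le_self 2 (by omega)
  have hNj : N < 2 ^ (j + 1 + 1) := hj ▸ Nat.lt_pow_succ_log_self one_lt_two N
  have hM := progLength_le hpos hmono
  have henergy : (progLength u j : ℝ) ^ 3 ≤
      2 * addEnergy (trunc (blockSeq (progLength u)) N) := by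
    exact_mod_cast pow_three_le_two_mul_addEnergy_trunc_blockSeq hM (j := j)
      (by have := hM j; rw [pow_succ] at hjN; omega)
  have hcube : (N : ℝ) ^ 3 ≤ 64 * 8 ^ j := by
    calc (N : ℝ) ^ 3 ≤ (2 ^ (j + 1 + 1)) ^ 3 := by gcongr; exact_mod_cast hNj.le
      _ = 64 * 8 ^ j := by rw [pow_right_comm, pow_succ, pow_succ]; norm_num; ring
  have hu0 := hpos 0
  have huj := hpos j
  calc u 0 / 1024 * (N ^ 3 / u (Nat.log 2 N)) ≤ u 0 / 1024 * (64 * 8 ^ j / u j) := by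
        gcongr
        exact hmono (by omega)
    _ = u 0 / 8 * (8 ^ j / u j) / 2 := by ring
    _ ≤ (progLength u j : ℝ) ^ 3 / 2 := by gcongr; exact le_progLength_pow_three hpos j
    _ ≤ _ := by linarith

end ProgressionLength

section EnergyAsymptotics

variable {f : ℝ → ℝ} {K : ℝ}

theorem eventually_le_mul_two_pow_log (hf_mono : MonotoneOn f (Set.Ioi 0))
    (hf_double : ∀ᶠ x in atTop, f (2 * x) ≤ K * f x) :
    ∀ᶠ N : ℕ in atTop, f N ≤ K * f (2 ^ Nat.log 2 N) := by
  have hlog : Tendsto (Nat.log 2) atTop atTop := tendsto_atTop_atTop_of_monotone Nat.log_monotone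
    fun b => ⟨2 ^ b, (Nat.log_pow one_lt_two b).ge⟩
  have hpow : Tendsto (fun N : ℕ => (2 : ℝ) ^ Nat.log 2 N) atTop atTop :=
    (tendsto_pow_atTop_atTop_of_one_lt one_lt_two).comp hlog
  filter_upwards [hpow.eventually hf_double, eventually_gt_atTop 0] with N hN hN0
  have hlt : (N : ℝ) ≤ 2 * 2 ^ Nat.log 2 N := by
    exact_mod_cast (Nat.lt_pow_succ_log_self one_lt_two N).le.trans_eq (pow_succ' 2 _)
  exact (hf_mono (Set.mem_Ioi.2 (by positivity)) (Set.mem_Ioi.2 (by positivity)) hlt).trans hN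

theorem monotone_comp_two_pow (hf_mono : MonotoneOn f (Set.Ioi 0)) :
    Monotone fun j : ℕ => f (2 ^ j) := fun _ _ hij =>
  hf_mono (Set.mem_Ioi.2 (by positivity)) (Set.mem_Ioi.2 (by positivity))
    (pow_le_pow_right₀ one_le_two hij)

theorem eventually_le_addEnergy_trunc (hf_pos : ∀ x, 0 < x → 0 < f x)
    (hf_mono : MonotoneOn f (Set.Ioi 0)) :
    ∀ᶠ N : ℕ in atTop, f 1 / 1024 * ((N : ℝ) ^ 3 / f N) ≤
      addEnergy (trunc (blockSeq (progLength fun j => f (2 ^ j))) N) := by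
  filter_upwards [eventually_ge_atTop 2] with N hN
  have hlog : (2 : ℝ) ^ Nat.log 2 N ≤ N := by exact_mod_cast Nat.pow_log_le_self 2 (by omega)
  have hf1 := hf_pos 1 one_pos
  have hfN := hf_pos (2 ^ Nat.log 2 N) (by positivity)
  calc f 1 / 1024 * ((N : ℝ) ^ 3 / f N) ≤ f 1 / 1024 * (N ^ 3 / f (2 ^ Nat.log 2 N)) := by
        gcongr
        exact hf_mono (Set.mem_Ioi.2 (by positivity)) (Set.mem_Ioi.2 (by positivity)) hlog
    _ ≤ _ := by
        simpa only [pow_zero] using le_addEnergy_trunc (u := fun j => f (2 ^ j))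
          (fun j => hf_pos _ (by positivity)) (monotone_comp_two_pow hf_mono) hN

theorem exists_eventually_addEnergy_trunc_le (hf_pos : ∀ x, 0 < x → 0 < f x)
    (hf_mono : MonotoneOn f (Set.Ioi 0)) (hf_O : f =O[atTop] id) (hK : K < 8)
    (hf_double : ∀ᶠ x in atTop, f (2 * x) ≤ K * f x) :
    ∃ C : ℝ, 0 < C ∧ ∀ᶠ N : ℕ in atTop,
      (addEnergy (trunc (blockSeq (progLength fun j => f (2 ^ j))) N) : ℝ) ≤
        C * ((N : ℝ) ^ 3 / f N) := by
  have hpow := tendsto_pow_atTop_atTop_of_one_lt (one_lt_two (α := ℝ))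
  obtain ⟨C, hC, hupper⟩ := exists_addEnergy_trunc_le (u := fun j => f (2 ^ j))
    (fun j => hf_pos _ (by positivity)) (monotone_comp_two_pow hf_mono) hK <|
      (hpow.eventually hf_double).mono fun j hj => by rwa [pow_succ']
  obtain ⟨c, hc, hlinear⟩ := hf_O.exists_pos
  have hKpos : 0 < K := by
    obtain ⟨x, hx, hx0⟩ := (hf_double.and (eventually_gt_atTop 0)).exists
    exact pos_of_mul_pos_left ((hf_pos _ (by positivity)).trans_le hx) (hf_pos x hx0).le
  refine ⟨6 * c + C * K, by positivity, ?_⟩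
  filter_upwards [tendsto_natCast_atTop_atTop.eventually hlinear.bound,
    eventually_le_mul_two_pow_log hf_mono hf_double, eventually_gt_atTop 0] with N hfc hfK hN
  have hN' : (0 : ℝ) < N := by exact_mod_cast hN
  have hfN := hf_pos N hN'
  have hflog := hf_pos (2 ^ Nat.log 2 N) (by positivity)
  rw [id, Real.norm_of_nonneg hfN.le, Real.norm_of_nonneg hN'.le] at hfc
  have hsq : (N : ℝ) ^ 2 ≤ c * (N ^ 3 / f N) := by
    rw [mul_div_assoc', le_div_iff₀ hfN]
    calc (N : ℝ) ^ 2 * f N ≤ N ^ 2 * (c * N) := by gcongr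
      _ = c * N ^ 3 := by ring
  have hcube : (N : ℝ) ^ 3 / f (2 ^ Nat.log 2 N) ≤ K * (N ^ 3 / f N) := by
    rw [mul_div_assoc', div_le_div_iff₀ hflog hfN]
    calc (N : ℝ) ^ 3 * f N ≤ N ^ 3 * (K * f (2 ^ Nat.log 2 N)) := by gcongr
      _ = K * N ^ 3 * f (2 ^ Nat.log 2 N) := by ring
  calc _ ≤ 6 * (N : ℝ) ^ 2 + C * (N ^ 3 / f (2 ^ Nat.log 2 N)) := hupper N hN.ne'
    _ ≤ 6 * (c * (N ^ 3 / f N)) + C * (K * (N ^ 3 / f N)) := by gcongr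
    _ = (6 * c + C * K) * (N ^ 3 / f N) := by ring

end EnergyAsymptotics

theorem isBigO_id_of_le_rpow_div_log_rpow {f : ℝ → ℝ} {C p q : ℝ} (hp : p ≤ 1) (hq : 0 ≤ q)
    (hf : ∀ᶠ x in atTop, 0 ≤ f x)
    (h : ∀ᶠ x in atTop, f x ≤ C * x ^ p / Real.log x ^ q) : f =O[atTop] id := by
  refine .of_bound |C| ?_
  filter_upwards [hf, h, eventually_ge_atTop 1, Real.tendsto_log_atTop.eventually_ge_atTop 1]
    with x hfx hx hx1 hlog
  have hlogq : 1 ≤ Real.log x ^ q := Real.one_le_rpow hlog hq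
  rw [id, Real.norm_of_nonneg hfx, Real.norm_of_nonneg (by positivity)]
  calc f x ≤ C * x ^ p / Real.log x ^ q := hx
    _ ≤ |C| * x ^ p / Real.log x ^ q := by gcongr; exact le_abs_self C
    _ ≤ |C| * x ^ p := div_le_self (by positivity) hlogq
    _ ≤ |C| * x := by gcongr; exact Real.rpow_le_self_of_one_le hx1 hp

theorem liminf_nonneg {ι : Type*} {l : Filter ι} {g : ι → ℝ} (hg : ∀ᶠ x in l, 0 ≤ g x) :
    0 ≤ liminf g l := by
  -- If `g` tends to infinity, this is the junk value `sSup = 0` of an unbounded set.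
  rw [liminf_eq]
  exact Real.sSup_nonneg' ⟨0, hg, le_rfl⟩

theorem convergence_case_of_second_main_theorem_general
    {f : ℝ → ℝ} {K : ℝ}
    (hf_pos : ∀ x, 0 < x → 0 < f x)
    (hf_mono : MonotoneOn f (Set.Ioi 0))
    (hf_O : f =O[atTop] id)
    (hK : K < 8)
    (hf_double : ∀ᶠ x in atTop, f (2 * x) ≤ K * f x) :
    ∃ a : ℕ → ℕ, (∀ n, 1 ≤ n → a n < a (n + 1)) ∧ 0 < a 1 ∧
      (∃ C₁ : ℝ, 0 < C₁ ∧ ∃ C₂ : ℝ, 0 < C₂ ∧ ∀ᶠ N : ℕ in atTop,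
        C₁ * ((N : ℝ) ^ 3 / f N) ≤ (addEnergy (trunc a N) : ℝ) ∧
        (addEnergy (trunc a N) : ℝ) ≤ C₂ * ((N : ℝ) ^ 3 / f N)) ∧
      dimH (NPPC a) = 1 := by
  have hpos : ∀ j : ℕ, 0 < f (2 ^ j) := fun j => hf_pos _ (by positivity)
  have hmono := monotone_comp_two_pow hf_mono
  have hshort : ∃ᶠ j in atTop, 2 * progLength (fun j => f (2 ^ j)) j ≤ 2 ^ j :=
    ((eventually_ne_atTop 0).mono fun _ => two_mul_progLength_le hpos hmono).frequently
  obtain ⟨C, hC, hupper⟩ := exists_eventually_addEnergy_trunc_le hf_pos hf_mono hf_O hK hf_double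
  exact ⟨blockSeq (progLength fun j => f (2 ^ j)),
    fun n => blockSeq_lt_blockSeq_succ (progLength_le hpos hmono), blockSeq_pos _ 1,
    ⟨f 1 / 1024, div_pos (hf_pos 1 one_pos) (by norm_num), C, hC,
      (eventually_le_addEnergy_trunc hf_pos hf_mono).and hupper⟩,
    dimH_NPPC_blockSeq hshort⟩

theorem convergence_case_of_second_main_theorem
    (f : ℝ → ℝ)
    (hf_gt : ∀ x : ℝ, 0 < x → 2 < f x)
    (hf_mono : MonotoneOn f (Set.Ioi (0 : ℝ)))
    (hf_top : Tendsto f atTop atTop)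
    (hf_O : ∃ C : ℝ, 0 < C ∧ ∀ᶠ x : ℝ in atTop,
      f x ≤ C * x ^ ((1 : ℝ) / 3) / (Real.log x) ^ ((7 : ℝ) / 3))
    (hconv : Summable fun n : ℕ => 1 / ((n : ℝ) * f n))
    (hsup : ∃ x₀ : ℝ, 0 < x₀ ∧ ∃ K : ℝ, K < 2 ∧ ∀ x : ℝ, x₀ ≤ x → f (2 * x) / f x ≤ K) :
    ∃ a : ℕ → ℕ, (∀ n, 1 ≤ n → a n < a (n + 1)) ∧ 0 < a 1 ∧
      (∃ C₁ : ℝ, 0 < C₁ ∧ ∃ C₂ : ℝ, 0 < C₂ ∧ ∀ᶠ N : ℕ in atTop,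
        C₁ * ((N : ℝ) ^ 3 / f N) ≤ (addEnergy (trunc a N) : ℝ) ∧
        (addEnergy (trunc a N) : ℝ) ≤ C₂ * ((N : ℝ) ^ 3 / f N)) ∧
      ENNReal.ofReal
          (1 / (1 + Filter.liminf (fun x : ℝ => Real.log (f x) / Real.log x) atTop)) ≤
        dimH (NPPC a) := by
  obtain ⟨C, -, hC⟩ := hf_O
  obtain ⟨x₀, hx₀, K, hK, hdouble⟩ := hsup
  have hpos : ∀ x, 0 < x → 0 < f x := fun x hx => two_pos.trans (hf_gt x hx)
  have hlinear : f =O[atTop] id := isBigO_id_of_le_rpow_div_log_rpow (by norm_num) (by norm_num)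
    ((eventually_gt_atTop 0).mono fun x hx => (hpos x hx).le) hC
  obtain ⟨a, ha, ha1, henergy, hdim⟩ := convergence_case_of_second_main_theorem_general hpos hf_mono
    hlinear (hK.trans (by norm_num)) <| (eventually_ge_atTop x₀).mono fun x hx =>
      (div_le_iff₀ (hpos x (hx₀.trans_le hx))).1 (hdouble x hx)
  have horder : 0 ≤ liminf (fun x => Real.log (f x) / Real.log x) atTop :=
    liminf_nonneg <| (eventually_ge_atTop 1).mono fun x hx => div_nonneg
      (Real.log_nonneg (one_le_two.trans (hf_gt x (one_pos.trans_le hx)).le)) (Real.log_nonneg hx)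
  refine ⟨a, ha, ha1, henergy, ?_⟩
  rw [hdim, ENNReal.ofReal_le_one]
  exact div_le_one_of_le₀ (by linarith) (by linarith)
end
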